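/- arXiv:1008.0156 — 5 statements merged into one kernel-verified Lean document; each statement's English description precedes it below -/
import Mathlib

section
/- Let S be a standard graded k-algebra of dimension d ≥ 1 over an infinite field k, and let k[X₁,...,X_d] ⊆ S and k[Y₁,...,Y_d] ⊆ S be graded Noether normalizations with all Xᵢ, Yᵢ ∈ S₁. Then there is a finite union M of proper k-subspaces of k^d such that for c = (c₁,...,c_d) ∈ k^d, the inclusion k[X₁,...,X_{d-1}, Σⱼ cⱼYⱼ] ⊆ S is a graded Noether normalization if and only if c ∉ M. -/
/-- A family `x : Fin d → S` of degree-1 elements gives a graded Noether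
normalization `k[x₁, …, x_d] ⊆ S`: the `xᵢ` generate a polynomial subring over
which `S` is module-finite. -/
def IsGradedNoetherNormalization (k : Type*) {S : Type*} [Field k] [CommRing S]
    [Algebra k S] (𝒜 : ℕ → Submodule k S) {d : ℕ} (x : Fin d → S) : Prop :=
  (∀ i, x i ∈ 𝒜 1) ∧ AlgebraicIndependent k x ∧
    Module.Finite (Algebra.adjoin k (Set.range x)) S

namespace GenericExchange

open DirectSum

section
variable {k S : Type*} [Field k] [CommRing S] [Algebra k S] (𝒜 : ℕ → Submodule k S)
  [GradedAlgebra 𝒜]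

theorem homog_of_minimal {I P : Ideal S} (hI : I.IsHomogeneous 𝒜) (hP : P ∈ I.minimalPrimes) :
    P.IsHomogeneous 𝒜 := by
  have h1 := hP.1.1.homogeneousCore (𝒜 := 𝒜)
  have h2 : I ≤ (P.homogeneousCore 𝒜).toIdeal := by
    rw [← hI.toIdeal_homogeneousCore_eq_self]
    exact Ideal.homogeneousCore_mono 𝒜 hP.1.2
  have h3 := hP.2 ⟨h1, h2⟩ (Ideal.toIdeal_homogeneousCore_le 𝒜 P)
  have h4 : (P.homogeneousCore 𝒜).toIdeal = P :=
    le_antisymm (Ideal.toIdeal_homogeneousCore_le 𝒜 P) h3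
  exact (Ideal.IsHomogeneous.iff_eq 𝒜 P).2 h4

theorem homog_span {ι : Type*} {Z : ι → S} (hZ : ∀ i, Z i ∈ 𝒜 1) :
    (Ideal.span (Set.range Z)).IsHomogeneous 𝒜 := by
  apply Ideal.homogeneous_span
  rintro _ ⟨i, rfl⟩
  exact ⟨1, hZ i⟩

theorem proj_zero_of_proper (h0 : 𝒜 0 = 1) {Q : Ideal S} (hQ : Q.IsHomogeneous 𝒜) (hQt : Q ≠ ⊤)
    {s : S} (hs : s ∈ Q) : (decompose 𝒜 s 0 : S) = 0 := by
  have h1 : (decompose 𝒜 s 0 : S) ∈ Q := hQ 0 hs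
  have h2 : (decompose 𝒜 s 0 : S) ∈ 𝒜 0 := SetLike.coe_mem _
  obtain ⟨c, hc⟩ := Submodule.mem_one.1 (h0.le h2)
  rw [← hc] at h1 ⊢
  by_cases hc0 : c = 0
  · simp [hc0]
  · exact absurd (Ideal.eq_top_of_isUnit_mem _ h1 ((Ne.isUnit hc0).map _)) hQt

theorem le_of_homog (h0 : 𝒜 0 = 1) (hstd : Algebra.adjoin k (𝒜 1 : Set S) = ⊤)
    {P Q : Ideal S} (hQ : Q.IsHomogeneous 𝒜) (hQt : Q ≠ ⊤)
    (hP : P.IsHomogeneous 𝒜) (hP1 : ∀ s ∈ 𝒜 1, s ∈ P) : Q ≤ P := by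
  have key : ∀ s : S, ∃ c : k, s - algebraMap k S c ∈ P := by
    intro s
    have hs : s ∈ Algebra.adjoin k (𝒜 1 : Set S) := by rw [hstd]; trivial
    induction hs using Algebra.adjoin_induction with
    | mem x hx => exact ⟨0, by simpa using hP1 x hx⟩
    | algebraMap r => exact ⟨r, by simp⟩
    | add x y _ _ hx hy =>
      obtain ⟨a, ha⟩ := hx
      obtain ⟨b, hb⟩ := hy
      refine ⟨a + b, ?_⟩
      have := P.add_mem ha hb
      rw [map_add]
      convert this using 1
      ring
    | mul x y _ _ hx hy =>
      obtain ⟨a, ha⟩ := hx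
      obtain ⟨b, hb⟩ := hy
      refine ⟨a * b, ?_⟩
      have := P.add_mem (P.mul_mem_left y ha) (P.mul_mem_left (algebraMap k S a) hb)
      rw [map_mul]
      convert this using 1
      ring
  intro s hs
  obtain ⟨c, hc⟩ := key s
  have h1 := proj_zero_of_proper 𝒜 h0 hQ hQt hs
  have h2 : (decompose 𝒜 (s - algebraMap k S c) 0 : S) ∈ P := hP 0 hc
  have h3 : (decompose 𝒜 (algebraMap k S c) 0 : S) = algebraMap k S c :=
    decompose_of_mem_same 𝒜 (SetLike.algebraMap_mem_graded 𝒜 c)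
  rw [decompose_sub, DirectSum.sub_apply, AddSubgroupClass.coe_sub, h1, h3] at h2
  have := P.sub_mem hc h2
  simpa using this

theorem deg_one_mem_of_maximal (h0 : 𝒜 0 = 1) 
    {Q : Ideal S} (hQ : Q.IsHomogeneous 𝒜) (hQm : Q.IsMaximal) : ∀ s ∈ 𝒜 1, s ∈ Q := by
  have hle : Q ≤ (HomogeneousIdeal.irrelevant 𝒜).toIdeal := by
    intro s hs
    exact proj_zero_of_proper 𝒜 h0 hQ hQm.ne_top hs
  have hne : (HomogeneousIdeal.irrelevant 𝒜).toIdeal ≠ ⊤ := by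
    intro h
    have : (1 : S) ∈ (HomogeneousIdeal.irrelevant 𝒜).toIdeal := by rw [h]; trivial
    have h1 : (decompose 𝒜 (1 : S) 0 : S) = 0 := this
    rw [decompose_of_mem_same 𝒜 (SetLike.one_mem_graded 𝒜)] at h1
    exact hQm.ne_top ((Ideal.eq_top_iff_one _).2 (h1 ▸ Q.zero_mem))
  have := hQm.eq_of_le hne hle
  intro s hs
  rw [this]
  exact HomogeneousIdeal.mem_irrelevant_of_mem 𝒜 one_pos hs

theorem integral_aeval {ι : Type*} {Z : ι → S}
    (hfin : Module.Finite (Algebra.adjoin k (Set.range Z)) S) :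
    (MvPolynomial.aeval (R := k) Z).toRingHom.IsIntegral := by
  intro s
  have hs : IsIntegral (Algebra.adjoin k (Set.range Z)) s := Algebra.IsIntegral.isIntegral s
  let e := MvPolynomial.aeval (R := k)
    (fun i => (⟨Z i, Algebra.subset_adjoin ⟨i, rfl⟩⟩ : Algebra.adjoin k (Set.range Z)))
  have hcomp : (MvPolynomial.aeval (R := k) Z).toRingHom =
      (algebraMap (Algebra.adjoin k (Set.range Z)) S).comp e.toRingHom := by
    have : (MvPolynomial.aeval (R := k) Z) = (Algebra.adjoin k (Set.range Z)).val.comp e := by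
      ext i
      simp [e]
    rw [this]; rfl
  have hsurj : Function.Surjective e.toRingHom := by
    rintro ⟨x, hx⟩
    rw [Algebra.adjoin_range_eq_range_aeval] at hx
    obtain ⟨p, hp⟩ := hx
    refine ⟨p, Subtype.ext ?_⟩
    have := congrArg (fun f => f p) hcomp
    exact this.symm.trans hp
  rw [hcomp]
  exact (RingHom.isIntegral_of_surjective _ hsurj).trans _ _
    (fun x => Algebra.IsIntegral.isIntegral (R := Algebra.adjoin k (Set.range Z)) x) s

theorem deg_one_mem_of_finite (h0 : 𝒜 0 = 1) {ι : Type*} {Z : ι → S} (hZ : ∀ i, Z i ∈ 𝒜 1)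
    (hfin : Module.Finite (Algebra.adjoin k (Set.range Z)) S)
    {P : Ideal S} (hP : P.IsPrime) (hPZ : ∀ i, Z i ∈ P) : ∀ s ∈ 𝒜 1, s ∈ P := by
  obtain ⟨Q, hQ, hQP⟩ := Ideal.exists_minimalPrimes_le
    (I := Ideal.span (Set.range Z)) (J := P) (Ideal.span_le.2 (by rintro _ ⟨i, rfl⟩; exact hPZ i))
  have := hQ.1.1
  have hint := (integral_aeval hfin).trans _ (Ideal.Quotient.mk Q)
    (RingHom.isIntegral_of_surjective _ Ideal.Quotient.mk_surjective)
  have hcomp : (Ideal.Quotient.mk Q).comp (MvPolynomial.aeval (R := k) Z).toRingHom =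
      (algebraMap k (S ⧸ Q)).comp (MvPolynomial.aeval (R := k) (fun _ : ι => (0 : k))).toRingHom := by
    apply MvPolynomial.ringHom_ext
    · intro r
      simp
    · intro i
      simpa using Ideal.Quotient.eq_zero_iff_mem.2 (hQ.1.2 (Ideal.subset_span ⟨i, rfl⟩))
  rw [hcomp] at hint
  have hint2 := RingHom.IsIntegral.tower_top _ _ hint
  have : Algebra.IsIntegral k (S ⧸ Q) := ⟨hint2⟩
  have hf : IsField (S ⧸ Q) := isField_of_isIntegral_of_isField' (Field.toIsField k)
  have hm := Ideal.Quotient.maximal_of_isField Q hf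
  intro s hs
  exact hQP (deg_one_mem_of_maximal 𝒜 h0 (homog_of_minimal 𝒜 (homog_span 𝒜 hZ) hQ) hm s hs)

theorem finite_quot (hfg : Algebra.FiniteType k S)
    (hstd : Algebra.adjoin k (𝒜 1 : Set S) = ⊤) {J : Ideal S}
    (hmin : ∀ Q ∈ J.minimalPrimes, ∀ s ∈ 𝒜 1, s ∈ Q) :
    Module.Finite k (S ⧸ J) := by
  have hnil : ∀ s ∈ 𝒜 1, s ∈ J.radical := by
    intro s hs
    rw [← Ideal.sInf_minimalPrimes, Submodule.mem_sInf]
    exact fun Q hQ => hmin Q hQ s hs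
  have h1 : ∀ s : S, IsIntegral k (Ideal.Quotient.mkₐ k J s) := by
    intro s
    have hs : s ∈ Algebra.adjoin k (𝒜 1 : Set S) := by rw [hstd]; trivial
    induction hs using Algebra.adjoin_induction with
    | mem x hx =>
      obtain ⟨n, hn⟩ := hnil x hx
      refine IsIntegral.of_pow (n := n + 1) (by simp) ?_
      rw [← map_pow, pow_succ]
      have : Ideal.Quotient.mkₐ k J (x ^ n * x) = 0 :=
        Ideal.Quotient.eq_zero_iff_mem.2 (J.mul_mem_right _ hn)
      rw [this]
      exact isIntegral_zero
    | algebraMap r => rw [AlgHom.commutes]; exact isIntegral_algebraMap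
    | add x y _ _ hx hy => rw [map_add]; exact hx.add hy
    | mul x y _ _ hx hy => rw [map_mul]; exact hx.mul hy
  have : Algebra.IsIntegral k (S ⧸ J) := ⟨fun x => by
    obtain ⟨s, rfl⟩ := Ideal.Quotient.mk_surjective x
    exact h1 s⟩
  have : Algebra.FiniteType k (S ⧸ J) :=
    hfg.of_surjective (Ideal.Quotient.mkₐ k J) Ideal.Quotient.mk_surjective
  exact Algebra.IsIntegral.finite

theorem nakayama {ι : Type*} [Fintype ι] {Z : ι → S} (hZ : ∀ i, Z i ∈ 𝒜 1)
    (hfin : Module.Finite k (S ⧸ Ideal.span (Set.range Z))) :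
    Module.Finite (Algebra.adjoin k (Set.range Z)) S := by
  classical
  set J := Ideal.span (Set.range Z) with hJ
  set A := Algebra.adjoin k (Set.range Z) with hA
  let H : Set S := {s | ∃ n, s ∈ 𝒜 n}
  let π : S →ₗ[k] S ⧸ J := (Ideal.Quotient.mkₐ k J).toLinearMap
  have hπ : Function.Surjective π := Ideal.Quotient.mk_surjective
  have hH : Submodule.span k H = ⊤ := by
    rw [eq_top_iff]
    intro s _
    rw [← sum_support_decompose 𝒜 s]
    exact Submodule.sum_mem _ fun i _ => Submodule.subset_span ⟨i, SetLike.coe_mem _⟩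
  have hH2 : Submodule.span k (π '' H) = ⊤ := by
    rw [Submodule.span_image, hH, Submodule.map_top, LinearMap.range_eq_top.2 hπ]
  obtain ⟨s', hs', hspan⟩ := (Submodule.fg_span_iff_fg_span_finset_subset (π '' H)).1
    (hH2 ▸ hfin.fg_top)
  obtain ⟨F, hFH, hFf, hF⟩ := Set.exists_subset_image_finite_and
    (f := π) (s := H) (p := fun t => Submodule.span k t = ⊤) |>.1
    ⟨(s' : Set _), hs', s'.finite_toSet, hspan ▸ hH2⟩
  let M : Submodule A S := Submodule.span A F
  have hdec : ∀ s : S, ∃ f ∈ Submodule.span k F, s - f ∈ J := by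
    intro s
    have : π s ∈ Submodule.span k (π '' F) := by rw [hF]; trivial
    rw [Submodule.span_image] at this
    obtain ⟨f, hf, hfs⟩ := this
    exact ⟨f, hf, Ideal.Quotient.eq.1 hfs.symm⟩
  have hM1 : ∀ f ∈ Submodule.span k F, ∀ n, (decompose 𝒜 f n : S) ∈ M := by
    intro f hf n
    induction hf using Submodule.span_induction with
    | mem x hx =>
      obtain ⟨m, hm⟩ := hFH hx
      by_cases hmn : m = n
      · subst hmn
        rw [decompose_of_mem_same 𝒜 hm]
        exact Submodule.subset_span hx
      · rw [decompose_of_mem_ne 𝒜 hm hmn]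
        exact M.zero_mem
    | zero => simp
    | add x y _ _ hx hy =>
      rw [decompose_add, DirectSum.add_apply]
      exact M.add_mem hx hy
    | smul a x _ hx =>
      rw [decompose_smul]
      have : ((a • decompose 𝒜 x) n : S) = (algebraMap k A a) • (decompose 𝒜 x n : S) := by
        rw [algebraMap_smul]; rfl
      rw [this]
      exact M.smul_mem _ hx
  have hM2 : ∀ n, ∀ s ∈ 𝒜 n, s ∈ M := by
    intro n
    induction n using Nat.strong_induction_on with
    | _ n ih =>
      intro s hs
      obtain ⟨f, hf, hfs⟩ := hdec s
      have h1 : (decompose 𝒜 (s - f) n : S) ∈ M := by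
        obtain ⟨c, hc⟩ := Ideal.mem_span_range_iff_exists_fun.1 hfs
        rw [← hc, decompose_sum, DFinsupp.finsetSum_apply, AddSubmonoidClass.coe_finsetSum]
        refine M.sum_mem fun i _ => ?_
        rw [coe_decompose_mul_of_right_mem 𝒜 n (hZ i)]
        split_ifs with hn
        · have h2 := ih (n - 1) (by omega) (decompose 𝒜 (c i) (n - 1) : S) (SetLike.coe_mem _)
          have h3 := M.smul_mem (⟨Z i, Algebra.subset_adjoin ⟨i, rfl⟩⟩ : A) h2
          rw [mul_comm]
          exact h3
        · exact M.zero_mem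
      have h2 := M.add_mem h1 (hM1 f hf n)
      rw [decompose_sub, DirectSum.sub_apply, AddSubgroupClass.coe_sub, sub_add_cancel,
        decompose_of_mem_same 𝒜 hs] at h2
      exact h2
  refine ⟨⟨hFf.toFinset, ?_⟩⟩
  rw [Set.Finite.coe_toFinset, eq_top_iff]
  intro s _
  rw [← sum_support_decompose 𝒜 s]
  exact M.sum_mem fun i _ => hM2 i _ (SetLike.coe_mem _)

theorem dim_le_of_integral {R T : Type*} [CommRing R] [CommRing T] (f : R →+* T)
    (hf : f.IsIntegral) : ringKrullDim T ≤ ringKrullDim R := by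
  algebraize [f]
  refine Order.krullDim_le_of_strictMono (PrimeSpectrum.comap f) ?_
  intro P Q hPQ
  exact Ideal.IsIntegral.comap_lt_comap (R := R) (A := T) (I := P.asIdeal) (J := Q.asIdeal) hPQ

theorem algInd_of_finite {d : ℕ} (hdim : ringKrullDim S = d) {Z : Fin d → S}
    (hfin : Module.Finite (Algebra.adjoin k (Set.range Z)) S) : AlgebraicIndependent k Z := by
  rw [algebraicIndependent_iff]
  intro p hp
  by_contra hne
  have hint := integral_aeval hfin
  have h1 := ringKrullDim_quotient_succ_le_of_nonZeroDivisor (mem_nonZeroDivisors_of_ne_zero hne)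
  have hker : ∀ a ∈ Ideal.span {p}, (MvPolynomial.aeval (R := k) Z).toRingHom a = 0 := by
    intro a ha
    obtain ⟨b, rfl⟩ := Ideal.mem_span_singleton.1 ha
    rw [map_mul]
    have : (MvPolynomial.aeval (R := k) Z).toRingHom p = 0 := hp
    rw [this, zero_mul]
  have hcomp : (Ideal.Quotient.lift _ _ hker).comp (Ideal.Quotient.mk (Ideal.span {p})) =
    (MvPolynomial.aeval (R := k) Z).toRingHom := Ideal.Quotient.lift_comp_mk _ _ _
  rw [← hcomp] at hint
  have h2 := dim_le_of_integral _ (RingHom.IsIntegral.tower_top _ _ hint)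
  rw [MvPolynomial.ringKrullDim_of_isNoetherianRing, ringKrullDim_eq_zero_of_field] at h1
  rw [hdim] at h2
  have h3 := (add_le_add_left h2 1).trans h1
  simp only [Nat.card_eq_fintype_card, Fintype.card_fin, zero_add] at h3
  have : ((d + 1 : ℕ) : WithBot ℕ∞) ≤ (d : ℕ) := by exact_mod_cast h3
  have : d + 1 ≤ d := by exact_mod_cast this
  omega

end

section
variable {k S : Type*} [Field k] [CommRing S] [Algebra k S] (𝒜 : ℕ → Submodule k S)
  [GradedAlgebra 𝒜]

theorem not_deg_one_le (hfg : Algebra.FiniteType k S) (h0 : 𝒜 0 = 1)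
    (hstd : Algebra.adjoin k (𝒜 1 : Set S) = ⊤) {d : ℕ} (hd : 1 ≤ d) {X : Fin d → S}
    (hX : IsGradedNoetherNormalization k 𝒜 X) {P : Ideal S}
    (hP : P ∈ (Ideal.span (Set.range
      (fun i : {i : Fin d // (i : ℕ) + 1 ≠ d} => X i.1))).minimalPrimes) :
    ¬ ∀ s ∈ 𝒜 1, s ∈ P := by
  intro hP1
  have hZ : ∀ i : {i : Fin d // (i : ℕ) + 1 ≠ d}, X i.1 ∈ 𝒜 1 := fun i => hX.1 i.1
  have hI := homog_span 𝒜 hZ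
  have hPh := homog_of_minimal 𝒜 hI hP
  have hall : ∀ Q ∈ (Ideal.span (Set.range
      (fun i : {i : Fin d // (i : ℕ) + 1 ≠ d} => X i.1))).minimalPrimes, ∀ s ∈ 𝒜 1, s ∈ Q := by
    intro Q hQ s hs
    have hQP := le_of_homog 𝒜 h0 hstd (homog_of_minimal 𝒜 hI hQ) hQ.1.1.ne_top hPh hP1
    exact hP.2 hQ.1 hQP (hP1 s hs)
  have hfin := nakayama 𝒜 hZ (finite_quot 𝒜 hfg hstd hall)
  have himg : Set.range (fun i : {i : Fin d // (i : ℕ) + 1 ≠ d} => X i.1) =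
      X '' {i : Fin d | (i : ℕ) + 1 ≠ d} := by
    ext s
    simp
  rw [himg] at hfin
  have hs : IsIntegral (Algebra.adjoin k (X '' {i : Fin d | (i : ℕ) + 1 ≠ d}))
    (X ⟨d - 1, by omega⟩) := Algebra.IsIntegral.isIntegral _
  have hnt : Nontrivial S := ⟨⟨0, 1, fun h => hP.1.1.ne_top
    ((Ideal.eq_top_iff_one _).2 (h ▸ P.zero_mem))⟩⟩
  refine hX.2.1.transcendental_adjoin (s := {i : Fin d | (i : ℕ) + 1 ≠ d})
    (i := ⟨d - 1, by omega⟩) ?_ hs.isAlgebraic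
  simp
  omega

theorem maximal_of_lt {d : ℕ} (hd : 1 ≤ d) {X : Fin d → S}
    (hX : Module.Finite (Algebra.adjoin k (Set.range X)) S) {P Q : Ideal S}
    (hP : P.IsPrime) (hQ : Q.IsPrime) (hPX : ∀ i : Fin d, (i : ℕ) + 1 ≠ d → X i ∈ P)
    (hPQ : P < Q) : Q.IsMaximal := by
  have hint := (integral_aeval hX).trans _ (Ideal.Quotient.mk P)
    (RingHom.isIntegral_of_surjective _ Ideal.Quotient.mk_surjective)
  let g : Polynomial k →ₐ[k] S ⧸ P :=
    Polynomial.aeval (Ideal.Quotient.mk P (X ⟨d - 1, by omega⟩))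
  have hcomp : (Ideal.Quotient.mk P).comp (MvPolynomial.aeval (R := k) X).toRingHom =
      g.toRingHom.comp (MvPolynomial.aeval (R := k)
        (fun i : Fin d => if (i : ℕ) + 1 = d then (Polynomial.X : Polynomial k) else 0)).toRingHom := by
    apply MvPolynomial.ringHom_ext
    · intro r
      simp only [RingHom.comp_apply, AlgHom.toRingHom_eq_coe, RingHom.coe_coe, MvPolynomial.aeval_C,
        AlgHom.commutes]
      rfl
    · intro i
      by_cases hi : (i : ℕ) + 1 = d
      · have : i = ⟨d - 1, by omega⟩ := Fin.ext (by simp; omega)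
        simp [g, hi, ← this]
      · simp [hi]
        exact Ideal.Quotient.eq_zero_iff_mem.2 (hPX i hi)
  rw [hcomp] at hint
  have hint2 := RingHom.IsIntegral.tower_top _ _ hint
  let _ : Algebra (Polynomial k) (S ⧸ P) := g.toRingHom.toAlgebra
  have : Algebra.IsIntegral (Polynomial k) (S ⧸ P) := ⟨hint2⟩
  have hcm : (Q.map (Ideal.Quotient.mk P)).comap (Ideal.Quotient.mk P) = Q :=
    Ideal.comap_map_mk hPQ.le
  have hne : Q.map (Ideal.Quotient.mk P) ≠ ⊥ := by
    intro h
    rw [h, ← RingHom.ker_eq_comap_bot, Ideal.mk_ker] at hcm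
    exact hPQ.ne hcm
  have hpr : (Q.map (Ideal.Quotient.mk P)).IsPrime :=
    Ideal.map_isPrime_of_surjective Ideal.Quotient.mk_surjective (by
      rw [Ideal.mk_ker]; exact hPQ.le)
  have hne2 := Ideal.IsIntegral.comap_ne_bot (R := Polynomial k) hne
  have hpr2 : ((Q.map (Ideal.Quotient.mk P)).comap
    (algebraMap (Polynomial k) (S ⧸ P))).IsPrime := Ideal.comap_isPrime _ _
  have hmax := hpr2.isMaximal hne2
  have hmax2 := Ideal.isMaximal_of_isIntegral_of_isMaximal_comap _ hmax
  rw [← hcm]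
  exact Ideal.comap_isMaximal_of_surjective _ Ideal.Quotient.mk_surjective

end

end GenericExchange

/-- Generic exchange for graded Noether normalizations: given two graded
Noether normalizations `k[X₁,…,X_d]` and `k[Y₁,…,Y_d]` of a standard graded
algebra `S` of dimension `d ≥ 1` over an infinite field, there is a finite
union of proper subspaces `M ⊊ k^d` such that `k[X₁,…,X_{d-1}, Σ cⱼYⱼ] ⊆ S` is
a graded Noether normalization iff `c ∉ M`. -/
theorem generic_exchange_noether_normalization (k S : Type*) [Field k]
    [Infinite k] [CommRing S] [Algebra k S] (𝒜 : ℕ → Submodule k S)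
    [GradedAlgebra 𝒜] (hfg : Algebra.FiniteType k S) (h0 : 𝒜 0 = 1)
    (hstd : Algebra.adjoin k (𝒜 1 : Set S) = ⊤)
    (d : ℕ) (hd : 1 ≤ d) (hdim : ringKrullDim S = d)
    (X Y : Fin d → S)
    (hX : IsGradedNoetherNormalization k 𝒜 X)
    (hY : IsGradedNoetherNormalization k 𝒜 Y) :
    ∃ (r : ℕ) (W : Fin r → Submodule k (Fin d → k)),
      (∀ i, W i ≠ ⊤) ∧
      ∀ c : Fin d → k,
        (IsGradedNoetherNormalization k 𝒜
            (fun i : Fin d => if (i : ℕ) + 1 = d then ∑ j, c j • Y j else X i)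
          ↔ c ∉ ⋃ i, (W i : Set (Fin d → k))) := by
  classical
  have hnoeth : IsNoetherianRing S := Algebra.FiniteType.isNoetherianRing k S
  set I : Ideal S := Ideal.span (Set.range
    (fun i : {i : Fin d // (i : ℕ) + 1 ≠ d} => X i.1)) with hI
  have hXI : ∀ i : Fin d, (i : ℕ) + 1 ≠ d → X i ∈ I := fun i hi =>
    Ideal.subset_span ⟨⟨i, hi⟩, rfl⟩
  have hfinite : I.minimalPrimes.Finite := Ideal.finite_minimalPrimes_of_isNoetherianRing S I
  have : Finite I.minimalPrimes := hfinite
  obtain ⟨r, ⟨e⟩⟩ := Finite.exists_equiv_fin I.minimalPrimes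
  let φ : (Fin d → k) →ₗ[k] S := Fintype.linearCombination k Y
  have hφ : ∀ c, φ c = ∑ j, c j • Y j := fun c => Fintype.linearCombination_apply k Y c
  let last : Fin d := ⟨d - 1, by omega⟩
  have hlast : (last : ℕ) + 1 = d := by simp [last]; omega
  refine ⟨r, fun i => ((e.symm i).1.restrictScalars k).comap φ, ?_, ?_⟩
  · intro i htop
    have hP := (e.symm i).2
    refine GenericExchange.not_deg_one_le 𝒜 hfg h0 hstd hd hX hP
      (GenericExchange.deg_one_mem_of_finite 𝒜 h0 hY.1 hY.2.2 hP.1.1 ?_)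
    intro j
    have h1 : (Pi.single j 1 : Fin d → k) ∈ ((e.symm i).1.restrictScalars k).comap φ := by
      exact htop.ge trivial
    have h2 : φ (Pi.single j 1) ∈ (e.symm i).1 := h1
    rwa [hφ, Finset.sum_eq_single j (by
      intro b _ hb
      simp [Pi.single_eq_of_ne hb]) (by simp), Pi.single_eq_same, one_smul] at h2
  · intro c
    rw [Set.mem_iUnion, not_exists]
    set Z : Fin d → S := fun i => if (i : ℕ) + 1 = d then ∑ j, c j • Y j else X i with hZ
    have hZlast : Z last = φ c := by rw [hφ]; simp only [hZ, hlast, if_true]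
    have hZX : ∀ i : Fin d, (i : ℕ) + 1 ≠ d → Z i = X i := fun i hi => by simp only [hZ, if_neg hi]
    have hZ1 : ∀ i, Z i ∈ 𝒜 1 := by
      intro i
      by_cases hi : (i : ℕ) + 1 = d
      · simp only [hZ, if_pos hi]
        exact Submodule.sum_mem _ fun j _ => Submodule.smul_mem _ _ (hY.1 j)
      · rw [hZX i hi]
        exact hX.1 i
    constructor
    · intro hNN i hi
      have hP := (e.symm i).2
      have hi' : φ c ∈ (e.symm i).1 := hi
      refine GenericExchange.not_deg_one_le 𝒜 hfg h0 hstd hd hX hP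
        (GenericExchange.deg_one_mem_of_finite 𝒜 h0 hNN.1 hNN.2.2 hP.1.1 ?_)
      intro j
      by_cases hj : (j : ℕ) + 1 = d
      · have : j = last := Fin.ext (by omega)
        rw [this, hZlast]
        exact hi'
      · rw [hZX j hj]
        exact hP.1.2 (hXI j hj)
    · intro hc
      have hfin : Module.Finite (Algebra.adjoin k (Set.range Z)) S := by
        refine GenericExchange.nakayama 𝒜 hZ1 (GenericExchange.finite_quot 𝒜 hfg hstd ?_)
        intro Q hQ
        have hQp := hQ.1.1
        have hZQ : ∀ i, Z i ∈ Q := fun i => hQ.1.2 (Ideal.subset_span ⟨i, rfl⟩)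
        have hIQ : I ≤ Q := by
          rw [hI, Ideal.span_le]
          rintro _ ⟨i, rfl⟩
          have := hZQ i.1
          rwa [hZX i.1 i.2] at this
        obtain ⟨P, hP, hPQ⟩ := Ideal.exists_minimalPrimes_le hIQ
        have hzP : φ c ∉ P := by
          have := hc (e ⟨P, hP⟩)
          have h2 : φ c ∉ (e.symm (e ⟨P, hP⟩)).1 := this
          rwa [Equiv.symm_apply_apply] at h2
        have hlt : P < Q := lt_of_le_of_ne hPQ (by
          rintro rfl
          exact hzP (hZlast ▸ hZQ last))
        exact GenericExchange.deg_one_mem_of_maximal 𝒜 h0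
          (GenericExchange.homog_of_minimal 𝒜 (GenericExchange.homog_span 𝒜 hZ1) hQ)
          (GenericExchange.maximal_of_lt hd hX.2.2 hP.1.1 hQp
            (fun i hi => hP.1.2 (hXI i hi)) hlt)
      exact ⟨hZ1, GenericExchange.algInd_of_finite hdim hfin, hfin⟩
end

section
/- Let S be a standard graded k-algebra of dimension d ≥ 1 over an infinite field k, and let k[X₁,...,X_d] and k[Y₁,...,Y_d] be graded Noether normalizations of S (all generators in S₁). Then there exists an index-free element: some k-linear combination y = Σⱼ cⱼYⱼ of the Yⱼ such that k[X₁,...,X_{d-1}, y] ⊆ S is again a graded Noether normalization of S. -/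
open DirectSum in
/-- A quotient in which the images of the normalizing elements are integral is finite over `k`. -/
theorem exch_finite_quotient {k S : Type*} [Field k] [CommRing S] [Algebra k S]
    (hfg : Algebra.FiniteType k S) {d : ℕ} (X : Fin d → S)
    (hX : Module.Finite (Algebra.adjoin k (Set.range X)) S) (I : Ideal S)
    (h : ∀ i, IsIntegral k (Ideal.Quotient.mk I (X i))) : Module.Finite k (S ⧸ I) := by
  have hint : Algebra.IsIntegral k (S ⧸ I) := by
    constructor
    intro b
    obtain ⟨s, rfl⟩ := Ideal.Quotient.mk_surjective b
    have h1 : IsIntegral (Algebra.adjoin k (Set.range X)) s :=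
      Algebra.IsIntegral.isIntegral s
    have h2 : IsIntegral (Algebra.adjoin k (Set.range X)) (Ideal.Quotient.mk I s) :=
      h1.map (IsScalarTower.toAlgHom (Algebra.adjoin k (Set.range X)) S (S ⧸ I))
    have hle : Algebra.adjoin k (Set.range X) ≤
        (integralClosure k (S ⧸ I)).comap (Ideal.Quotient.mkₐ k I) := by
      rw [Algebra.adjoin_le_iff]
      rintro _ ⟨i, rfl⟩
      exact h i
    obtain ⟨p, hp, hp0⟩ := h2
    let φ : Algebra.adjoin k (Set.range X) →+* integralClosure k (S ⧸ I) :=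
      { toFun := fun a => ⟨Ideal.Quotient.mk I a, hle a.2⟩
        map_one' := by ext; simp
        map_mul' := by intros; ext; simp
        map_zero' := by ext; simp
        map_add' := by intros; ext; simp }
    have h3 : IsIntegral (integralClosure k (S ⧸ I)) (Ideal.Quotient.mk I s) := by
      refine ⟨p.map φ, hp.map φ, ?_⟩
      rw [Polynomial.eval₂_map]
      exact hp0
    exact isIntegral_trans _ h3
  have : Algebra.FiniteType k (S ⧸ I) :=
    hfg.of_surjective (Ideal.Quotient.mkₐ k I) Ideal.Quotient.mk_surjective
  exact Algebra.IsIntegral.finite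

open DirectSum in
/-- Degree-one elements are nilpotent modulo a homogeneous ideal with integral quotient. -/
theorem exch_pow_mem_of_integral {k S : Type*} [Field k] [CommRing S] [Algebra k S]
    (𝒜 : ℕ → Submodule k S) [GradedAlgebra 𝒜] (J : Ideal S) (hJ : J.IsHomogeneous 𝒜)
    {a : S} (ha : a ∈ 𝒜 1) (h : IsIntegral k (Ideal.Quotient.mk J a)) : ∃ n, a ^ n ∈ J := by
  obtain ⟨p, hp, hp0⟩ := h
  have hmem : Polynomial.aeval a p ∈ J := by
    rw [← Ideal.Quotient.eq_zero_iff_mem]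
    have := Polynomial.aeval_algHom_apply (Ideal.Quotient.mkₐ k J) a p
    change _ = Ideal.Quotient.mk J (Polynomial.aeval a p) at this
    rw [← this]
    exact hp0
  refine ⟨p.natDegree, ?_⟩
  have h1 := hJ p.natDegree hmem
  have hpow : ∀ i, a ^ i ∈ 𝒜 i := fun i => by
    simpa using SetLike.pow_mem_graded i ha
  rw [Polynomial.aeval_eq_sum_range, decompose_sum, DFinsupp.finsetSum_apply,
    AddSubmonoidClass.coe_finsetSum, Finset.sum_eq_single p.natDegree] at h1
  · rwa [decompose_of_mem_same _ (Submodule.smul_mem _ _ (hpow _)), hp.coeff_natDegree,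
      one_smul] at h1
  · intro b _ hb
    exact decompose_of_mem_ne _ (Submodule.smul_mem _ _ (hpow _)) hb
  · intro hn
    simp at hn

open DirectSum in
/-- Dehomogenization: if `a - 1` is invertible modulo a homogeneous ideal, `a` is nilpotent. -/
theorem exch_pow_mem_of_inv {k S : Type*} [Field k] [CommRing S] [Algebra k S]
    (𝒜 : ℕ → Submodule k S) [GradedAlgebra 𝒜] (J : Ideal S) (hJ : J.IsHomogeneous 𝒜)
    {a r : S} (ha : a ∈ 𝒜 1) (h : (a - 1) * r - 1 ∈ J) : ∃ n, a ^ n ∈ J := by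
  classical
  have key : ∀ i, (decompose 𝒜 r i : S) + a ^ i ∈ J := by
    intro i
    have h1 := hJ i h
    rw [sub_mul, one_mul, decompose_sub, decompose_sub] at h1
    induction i with
    | zero =>
      have e : (decompose 𝒜 (a * r) 0 : S) = 0 :=
        coe_decompose_mul_of_left_mem_of_not_le 𝒜 ha (by norm_num)
      have e1 : (decompose 𝒜 (1 : S) 0 : S) = 1 :=
        decompose_of_mem_same _ SetLike.GradedOne.one_mem
      simp only [DirectSum.sub_apply, AddSubgroupClass.coe_sub, e, e1] at h1
      rw [← neg_mem_iff]
      convert h1 using 1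
      ring
    | succ n ih =>
      have e : (decompose 𝒜 (a * r) (n + 1) : S) = a * decompose 𝒜 r n := by
        rw [add_comm]; exact coe_decompose_mul_add_of_left_mem 𝒜 ha
      have e1 : (decompose 𝒜 (1 : S) (n + 1) : S) = 0 :=
        decompose_of_mem_ne _ SetLike.GradedOne.one_mem (by omega)
      simp only [DirectSum.sub_apply, AddSubgroupClass.coe_sub, e, e1] at h1
      have h2 := hJ n h
      rw [sub_mul, one_mul, decompose_sub, decompose_sub] at h2
      have h3 := J.mul_mem_left a (ih h2)
      have h4 := J.sub_mem h3 h1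
      convert h4 using 1
      ring
  obtain ⟨n, hn⟩ := Infinite.exists_notMem_finset (DFinsupp.support (decompose 𝒜 r))
  refine ⟨n, ?_⟩
  have := key n
  rw [DFinsupp.notMem_support_iff.mp hn] at this
  simpa using this

open DirectSum in
/-- Graded Nakayama. -/
theorem exch_nakayama {k S : Type*} [Field k] [CommRing S] [Algebra k S]
    (𝒜 : ℕ → Submodule k S) [GradedAlgebra 𝒜] {d : ℕ} (z : Fin d → S) (hz : ∀ i, z i ∈ 𝒜 1)
    (h : Module.Finite k (S ⧸ Ideal.span (Set.range z))) :
    Module.Finite (Algebra.adjoin k (Set.range z)) S := by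
  classical
  obtain ⟨t, ht⟩ := h.fg_top
  let G : Finset S := t.image (Function.surjInv Ideal.Quotient.mk_surjective)
  let F : Finset S := G.biUnion fun g =>
    (DFinsupp.support (decompose 𝒜 g)).image fun i => (decompose 𝒜 g i : S)
  let M : Submodule (Algebra.adjoin k (Set.range z)) S := Submodule.span _ (F : Set S)
  have hG : ∀ v ∈ Submodule.span k (G : Set S), ∀ n, (decompose 𝒜 v n : S) ∈ M := by
    intro v hv n
    induction hv using Submodule.span_induction with
    | mem g hg =>
      by_cases hn : n ∈ DFinsupp.support (decompose 𝒜 g)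
      · apply Submodule.subset_span
        simp only [F, Finset.coe_biUnion, Set.mem_iUnion]
        exact ⟨g, hg, Finset.mem_coe.mpr (Finset.mem_image_of_mem _ hn)⟩
      · rw [DFinsupp.notMem_support_iff.mp hn]
        exact M.zero_mem
    | zero => simp
    | add x y _ _ hx hy =>
      rw [decompose_add, DirectSum.add_apply, Submodule.coe_add]
      exact M.add_mem hx hy
    | smul c x _ hx =>
      rw [decompose_smul]
      have := M.smul_mem (algebraMap k _ c) hx
      rwa [algebraMap_smul] at this
  have hGJ : ∀ a : S, ∃ v ∈ Submodule.span k (G : Set S), a - v ∈ Ideal.span (Set.range z) := by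
    intro a
    have hle : (⊤ : Submodule k (S ⧸ Ideal.span (Set.range z))) ≤
        (Submodule.span k (G : Set S)).map
          (Ideal.Quotient.mkₐ k (Ideal.span (Set.range z))).toLinearMap := by
      rw [← ht, Submodule.span_le]
      intro b hb
      refine ⟨_, Submodule.subset_span (Finset.mem_coe.mpr (Finset.mem_image_of_mem _ hb)), ?_⟩
      exact Function.surjInv_eq Ideal.Quotient.mk_surjective b
    obtain ⟨v, hv, hva⟩ := hle (x := Ideal.Quotient.mk _ a) trivial
    refine ⟨v, hv, ?_⟩
    rw [← Ideal.Quotient.eq_zero_iff_mem, map_sub, sub_eq_zero]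
    exact hva.symm
  have main : ∀ n, ∀ a ∈ 𝒜 n, a ∈ M := by
    intro n
    induction n with
    | zero =>
      intro a ha
      obtain ⟨v, hv, hva⟩ := hGJ a
      obtain ⟨r, hr⟩ := Ideal.mem_span_range_iff_exists_fun.mp hva
      have e : a = decompose 𝒜 v 0 + decompose 𝒜 (a - v) 0 := by
        rw [← Submodule.coe_add, ← DirectSum.add_apply, ← decompose_add, add_sub_cancel,
          decompose_of_mem_same _ ha]
      rw [e]
      refine M.add_mem (hG v hv 0) ?_
      rw [← hr, decompose_sum, DFinsupp.finsetSum_apply, AddSubmonoidClass.coe_finsetSum]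
      refine M.sum_mem fun i _ => ?_
      rw [coe_decompose_mul_of_right_mem_of_not_le 𝒜 (hz i) (by norm_num)]
      exact M.zero_mem
    | succ n ih =>
      intro a ha
      obtain ⟨v, hv, hva⟩ := hGJ a
      obtain ⟨r, hr⟩ := Ideal.mem_span_range_iff_exists_fun.mp hva
      have e : a = decompose 𝒜 v (n + 1) + decompose 𝒜 (a - v) (n + 1) := by
        rw [← Submodule.coe_add, ← DirectSum.add_apply, ← decompose_add, add_sub_cancel,
          decompose_of_mem_same _ ha]
      rw [e]
      refine M.add_mem (hG v hv _) ?_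
      rw [← hr, decompose_sum, DFinsupp.finsetSum_apply, AddSubmonoidClass.coe_finsetSum]
      refine M.sum_mem fun i _ => ?_
      rw [coe_decompose_mul_add_of_right_mem 𝒜 (hz i), mul_comm]
      exact M.smul_mem (⟨z i, Algebra.subset_adjoin ⟨i, rfl⟩⟩ : Algebra.adjoin k (Set.range z))
        (ih _ (SetLike.coe_mem _))
  refine ⟨⟨F, ?_⟩⟩
  rw [eq_top_iff]
  intro a _
  change a ∈ M
  rw [← sum_support_decompose 𝒜 a]
  exact M.sum_mem fun i _ => main i _ (SetLike.coe_mem _)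

/-- Krull dimension does not increase along an integral extension. -/
theorem exch_dim_le {R S : Type*} [CommRing R] [CommRing S] [Algebra R S]
    [Algebra.IsIntegral R S] : ringKrullDim S ≤ ringKrullDim R := by
  refine Order.krullDim_le_of_strictMono (PrimeSpectrum.comap (algebraMap R S)) ?_
  intro p q hpq
  obtain ⟨hle, x, hxq, hxp⟩ := SetLike.lt_iff_le_and_exists.mp
    (show p.asIdeal < q.asIdeal from hpq)
  exact Ideal.comap_lt_comap_of_integral_mem_sdiff hle ⟨hxq, hxp⟩
    (Algebra.IsIntegral.isIntegral x)

/-- Finite over a subalgebra generated by `d = dim` elements forces algebraic independence. -/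
theorem exch_algInd {k S : Type*} [Field k] [CommRing S] [Algebra k S] {d : ℕ}
    (hdim : ringKrullDim S = d) (z : Fin d → S)
    (h : Module.Finite (Algebra.adjoin k (Set.range z)) S) : AlgebraicIndependent k z := by
  have h1 : (d : WithBot ℕ∞) ≤ ringKrullDim (Algebra.adjoin k (Set.range z)) := by
    rw [← hdim]; exact exch_dim_le
  rw [Algebra.adjoin_range_eq_range_aeval] at h1
  by_contra hcon
  have hcon' : ¬ Function.Injective (MvPolynomial.aeval z : MvPolynomial (Fin d) k →ₐ[k] S) := hcon
  rw [injective_iff_map_eq_zero] at hcon'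
  push Not at hcon'
  obtain ⟨p, hp, hp0⟩ := hcon'
  have h2 := ringKrullDim_succ_le_of_surjective
    (MvPolynomial.aeval z : MvPolynomial (Fin d) k →ₐ[k] S).rangeRestrict.toRingHom
    (AlgHom.rangeRestrict_surjective _) (r := p) (mem_nonZeroDivisors_of_ne_zero hp0)
    (by ext; exact hp)
  rw [MvPolynomial.ringKrullDim_of_isNoetherianRing, ringKrullDim_eq_zero_of_field] at h2
  have h3 := (add_le_add_left h1 1).trans h2
  simp only [Nat.card_eq_fintype_card, Fintype.card_fin, zero_add] at h3
  norm_cast at h3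
  omega

theorem exists_exchange_noether_normalization (k S : Type*) [Field k]
    [Infinite k] [CommRing S] [Algebra k S] (𝒜 : ℕ → Submodule k S)
    [GradedAlgebra 𝒜] (hfg : Algebra.FiniteType k S) (h0 : 𝒜 0 = 1)
    (hstd : Algebra.adjoin k (𝒜 1 : Set S) = ⊤)
    (d : ℕ) (hd : 1 ≤ d) (hdim : ringKrullDim S = d)
    (X Y : Fin d → S)
    (hX : IsGradedNoetherNormalization k 𝒜 X)
    (hY : IsGradedNoetherNormalization k 𝒜 Y) :
    ∃ c : Fin d → k,
      IsGradedNoetherNormalization k 𝒜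
        (fun i : Fin d => if (i : ℕ) + 1 = d then ∑ j, c j • Y j else X i) := by
  obtain ⟨hX1, -, hXf⟩ := hX
  obtain ⟨hY1, -, hYf⟩ := hY
  let l : Fin d := ⟨d - 1, by omega⟩
  have hl : ∀ i : Fin d, (i : ℕ) + 1 = d → i = l := fun i hi => Fin.ext (by simp [l]; omega)
  have hl' : (l : ℕ) + 1 = d := by simp [l]; omega
  -- the dehomogenized fibre
  let B0 : Ideal S := Ideal.span {s | (∃ i : Fin d, (i : ℕ) + 1 ≠ d ∧ s = X i) ∨ s = X l - 1}
  have hBl : Ideal.Quotient.mk B0 (X l) = 1 := by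
    rw [← map_one (Ideal.Quotient.mk B0), Ideal.Quotient.eq]
    exact Ideal.subset_span (Or.inr rfl)
  have hBfin : Module.Finite k (S ⧸ B0) := by
    refine exch_finite_quotient hfg X hXf B0 fun i => ?_
    by_cases hi : (i : ℕ) + 1 = d
    · rw [hl i hi, hBl]; exact isIntegral_one
    · have hm : X i ∈ B0 := Ideal.subset_span (Or.inl ⟨i, hi, rfl⟩)
      rw [Ideal.Quotient.eq_zero_iff_mem.mpr hm]
      exact isIntegral_zero
  have hArt : IsArtinianRing (S ⧸ B0) := IsArtinianRing.of_finite k _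
  -- a power of `X l` lies in the ideal generated by the `Y j`
  obtain ⟨n, hn⟩ : ∃ n, X l ^ n ∈ Ideal.span (Set.range Y) := by
    have hfin : Module.Finite k (S ⧸ Ideal.span (Set.range Y)) := by
      refine exch_finite_quotient hfg Y hYf _ fun i => ?_
      have hm : Y i ∈ Ideal.span (Set.range Y) := Ideal.subset_span ⟨i, rfl⟩
      rw [Ideal.Quotient.eq_zero_iff_mem.mpr hm]
      exact isIntegral_zero
    refine exch_pow_mem_of_integral 𝒜 _ (Ideal.homogeneous_span _ _ ?_) (hX1 l)
      (Algebra.IsIntegral.isIntegral _)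
    rintro _ ⟨i, rfl⟩
    exact ⟨1, hY1 i⟩
  -- choose `c` generically
  let L : (Fin d → k) →ₗ[k] S ⧸ B0 :=
    (Ideal.Quotient.mkₐ k B0).toLinearMap ∘ₗ Fintype.linearCombination k Y
  obtain ⟨c, hc⟩ : ∃ c : Fin d → k, ∀ m : MaximalSpectrum (S ⧸ B0), L c ∉ m.asIdeal := by
    by_contra hcon
    push Not at hcon
    obtain ⟨m, hm⟩ := Subspace.exists_eq_top_of_iUnion_eq_univ
      (p := fun m : MaximalSpectrum (S ⧸ B0) => (m.asIdeal.restrictScalars k).comap L) (by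
        rw [Set.eq_univ_iff_forall]
        intro c
        obtain ⟨m, hm⟩ := hcon c
        exact Set.mem_iUnion.mpr ⟨m, hm⟩)
    have hYm : ∀ j, Ideal.Quotient.mk B0 (Y j) ∈ m.asIdeal := by
      intro j
      have : Pi.single j (1 : k) ∈ (m.asIdeal.restrictScalars k).comap L := by
        rw [hm]; trivial
      have h2 : L (Pi.single j (1 : k)) ∈ m.asIdeal := this
      simpa [L] using h2
    have hle : Ideal.span (Set.range Y) ≤ m.asIdeal.comap (Ideal.Quotient.mk B0) := by
      rw [Ideal.span_le]
      rintro _ ⟨j, rfl⟩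
      exact hYm j
    have h1 : Ideal.Quotient.mk B0 (X l ^ n) ∈ m.asIdeal := hle hn
    rw [map_pow, hBl, one_pow] at h1
    exact m.isMaximal.ne_top ((Ideal.eq_top_iff_one _).mpr h1)
  refine ⟨c, ?_⟩
  set y : S := ∑ j, c j • Y j with hy
  set z : Fin d → S := fun i : Fin d => if (i : ℕ) + 1 = d then y else X i with hz
  have hy1 : y ∈ 𝒜 1 := Submodule.sum_mem _ fun j _ => Submodule.smul_mem _ _ (hY1 j)
  have hz1 : ∀ i, z i ∈ 𝒜 1 := by
    intro i
    simp only [hz]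
    split_ifs
    exacts [hy1, hX1 i]
  have hLc : L c = Ideal.Quotient.mk B0 y := by
    simp [L, hy, Fintype.linearCombination_apply]
  have hunit : IsUnit (Ideal.Quotient.mk B0 y) := by
    by_contra hnu
    obtain ⟨m, hm, hym⟩ := exists_max_ideal_of_mem_nonunits hnu
    exact hc ⟨m, hm⟩ (hLc ▸ hym)
  have hJhom : (Ideal.span (Set.range z)).IsHomogeneous 𝒜 := by
    refine Ideal.homogeneous_span _ _ ?_
    rintro _ ⟨i, rfl⟩
    exact ⟨1, hz1 i⟩
  have hyJ : y ∈ Ideal.span (Set.range z) :=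
    Ideal.subset_span ⟨l, by simp only [hz, hl', if_true]⟩
  have hXJ : ∀ i : Fin d, (i : ℕ) + 1 ≠ d → X i ∈ Ideal.span (Set.range z) := fun i hi =>
    Ideal.subset_span ⟨i, by simp only [hz, hi, if_false]⟩
  obtain ⟨N, hN⟩ : ∃ N, X l ^ N ∈ Ideal.span (Set.range z) := by
    obtain ⟨b, hb⟩ := hunit.exists_right_inv
    obtain ⟨s, rfl⟩ := Ideal.Quotient.mk_surjective b
    rw [← map_mul, ← map_one (Ideal.Quotient.mk B0), Ideal.Quotient.eq] at hb
    have hle : B0 ≤ Ideal.span {X l - 1} ⊔ Ideal.span (Set.range z) := by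
      rw [Ideal.span_le]
      rintro _ (⟨i, hi, rfl⟩ | rfl)
      · exact Ideal.mem_sup_right (hXJ i hi)
      · exact Ideal.mem_sup_left (Ideal.mem_span_singleton_self _)
    obtain ⟨u, hu, v, hv, huv⟩ := Submodule.mem_sup.mp (hle hb)
    obtain ⟨r, rfl⟩ := Ideal.mem_span_singleton'.mp hu
    refine exch_pow_mem_of_inv 𝒜 _ hJhom (hX1 l) (r := -r) ?_
    have h1 := Ideal.sub_mem _ hv (Ideal.mul_mem_right s _ hyJ)
    have e : (X l - 1) * -r - 1 = v - y * s := by linear_combination -huv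
    rw [e]
    exact h1
  have hfin : Module.Finite k (S ⧸ Ideal.span (Set.range z)) := by
    refine exch_finite_quotient hfg X hXf _ fun i => ?_
    by_cases hi : (i : ℕ) + 1 = d
    · rw [hl i hi]
      refine IsIntegral.of_pow (n := N + 1) (Nat.succ_pos _) ?_
      rw [← map_pow, Ideal.Quotient.eq_zero_iff_mem.mpr]
      · exact isIntegral_zero
      · rw [pow_succ]; exact Ideal.mul_mem_right _ _ hN
    · rw [Ideal.Quotient.eq_zero_iff_mem.mpr (hXJ i hi)]
      exact isIntegral_zero
  have hfin' := exch_nakayama 𝒜 z hz1 hfin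
  exact ⟨hz1, exch_algInd hdim z hfin', hfin'⟩
end

section
/- Let (R, 𝔪, k) be a Noetherian local ring with infinite residue field, I a proper ideal of analytic spread d > 0, and let 𝔞 = (a₁,...,a_d) and 𝔟 = (b₁,...,b_d) be minimal reductions of I. Then there exist finitely many ideals J₁,...,Jᵣ with 𝔪𝔟 ⊆ Jᵢ ⊆ 𝔟 and J₁ ∪ ... ∪ Jᵣ ⊊ 𝔟, such that for b ∈ 𝔟, the ideal (a₁,...,a_{d-1}, b) is a minimal reduction of I if and only if b ∉ J₁ ∪ ... ∪ Jᵣ. -/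
/-- `J` is a reduction of `I`: `J ⊆ I` and `J Iⁿ = I^{n+1}` for some `n`. -/
def IsReduction {R : Type*} [CommRing R] (J I : Ideal R) : Prop :=
  J ≤ I ∧ ∃ n : ℕ, I ^ (n + 1) = J * I ^ n

/-- `J` is a minimal reduction of `I`: a reduction minimal w.r.t. inclusion. -/
def IsMinimalReduction {R : Type*} [CommRing R] (J I : Ideal R) : Prop :=
  IsReduction J I ∧ ∀ J' : Ideal R, IsReduction J' I → J' ≤ J → J' = J

/-- The fiber (special fiber) ring `𝓕(I) = 𝓡(I)/𝔪𝓡(I) = ⊕ Iⁿ/𝔪Iⁿ` of an ideal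
`I` in a local ring `(R, 𝔪)`. -/
noncomputable def fiberRing (R : Type*) [CommRing R] [IsLocalRing R]
    (I : Ideal R) : Type _ :=
  ↥(reesAlgebra I) ⧸
    (Ideal.map (algebraMap R ↥(reesAlgebra I)) (IsLocalRing.maximalIdeal R))

noncomputable instance (R : Type*) [CommRing R] [IsLocalRing R] (I : Ideal R) :
    CommRing (fiberRing R I) :=
  inferInstanceAs (CommRing (↥(reesAlgebra I) ⧸
    (Ideal.map (algebraMap R ↥(reesAlgebra I)) (IsLocalRing.maximalIdeal R))))

/-- The analytic spread `ℓ(I) = dim 𝓕(I)`. -/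
noncomputable def analyticSpread (R : Type*) [CommRing R] [IsLocalRing R]
    (I : Ideal R) : WithBot ℕ∞ :=
  ringKrullDim (fiberRing R I)


namespace GenExch
open Polynomial IsLocalRing

variable {R : Type*} [CommRing R]

/-- The element `y tⁿ` of the Rees algebra. -/
noncomputable def mon (I : Ideal R) (n : ℕ) (y : R) (hy : y ∈ I ^ n) : reesAlgebra I :=
  ⟨monomial n y, reesAlgebra.monomial_mem.mpr hy⟩

theorem eq_sum_mon (I : Ideal R) (f : reesAlgebra I) :
    f = ∑ n ∈ (f : R[X]).support, mon I n ((f : R[X]).coeff n) (f.2 n) := by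
  apply Subtype.ext
  conv_lhs => rw [(f : R[X]).as_sum_support]
  simp [mon]

/-- the ideal `𝔪 S + (J t) S` of the Rees algebra `S = R[It]`. -/
noncomputable def KI [IsLocalRing R] (I J : Ideal R) : Ideal (reesAlgebra I) :=
  Ideal.span {f | (∃ y ∈ J, (f : R[X]) = monomial 1 y) ∨
    (∃ r ∈ maximalIdeal R, (f : R[X]) = monomial 0 r)}

/-- degree `n` piece of `KI`. -/
def E [IsLocalRing R] (I J : Ideal R) : ℕ → Ideal R
  | 0 => maximalIdeal R
  | n + 1 => J * I ^ n ⊔ maximalIdeal R * I ^ (n + 1)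

theorem E_mul [IsLocalRing R] (I J : Ideal R) (i j : ℕ) :
    I ^ i * E I J j ≤ E I J (i + j) := by
  cases j with
  | zero =>
    cases i with
    | zero => simp [E]
    | succ i =>
      simp only [E, add_zero]
      rw [mul_comm]
      exact le_sup_right
  | succ j =>
    rw [← add_assoc]
    simp only [E]
    rw [Ideal.mul_sup]
    apply sup_le_sup
    · rw [pow_add]
      apply le_of_eq; ring
    · rw [add_assoc, pow_add]
      apply le_of_eq; ring

theorem coeff_mem_E [IsLocalRing R] (I J : Ideal R) (hJ : J ≤ I) (f : reesAlgebra I)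
    (hf : f ∈ KI I J) (n : ℕ) : (f : R[X]).coeff n ∈ E I J n := by
  unfold KI at hf
  induction hf using Submodule.span_induction generalizing n with
  | mem x hx =>
    rcases hx with ⟨y, hy, e⟩ | ⟨y, hy, e⟩
    · rw [e, coeff_monomial]
      split_ifs with h
      · subst h; simp only [E]; apply Ideal.mem_sup_left; simpa using hy
      · exact zero_mem _
    · rw [e, coeff_monomial]
      split_ifs with h
      · subst h; exact hy
      · exact zero_mem _
  | zero => simp
  | add x y _ _ hx hy => simpa using add_mem (hx n) (hy n)
  | smul a x _ hx =>
    simp only [smul_eq_mul, MulMemClass.coe_mul, coeff_mul]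
    apply Ideal.sum_mem
    rintro ⟨i, j⟩ hij
    rw [Finset.HasAntidiagonal.mem_antidiagonal] at hij
    subst hij
    exact E_mul I J i j (Ideal.mul_mem_mul (a.2 i) (hx j))

/-- the maximal ideal `𝔪 + It + I²t² + ...`. -/
noncomputable def MI [IsLocalRing R] (I : Ideal R) : Ideal (reesAlgebra I) :=
  Ideal.comap ((constantCoeff : R[X] →+* R).comp (reesAlgebra I).val.toRingHom) (maximalIdeal R)

theorem mem_MI [IsLocalRing R] (I : Ideal R) (f : reesAlgebra I) :
    f ∈ MI I ↔ (f : R[X]).coeff 0 ∈ maximalIdeal R := by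
  simp [MI]

instance [IsLocalRing R] (I : Ideal R) : (MI I).IsPrime := by
  unfold MI; infer_instance

theorem MI_maximal [IsLocalRing R] (I : Ideal R) : (MI I).IsMaximal := by
  unfold MI
  refine Ideal.comap_isMaximal_of_surjective _ ?_
  intro r
  exact ⟨algebraMap R _ r, by simp⟩

theorem mon_mem [IsLocalRing R] (I : Ideal R) (n : ℕ) (y : R) (hy : y ∈ I ^ (n+1)) :
    mon I (n+1) y hy ∈ KI I I := by
  have : ∀ z (hz : z ∈ I * I ^ n), mon I (n+1) z (by rwa [pow_succ'] ) ∈ KI I I := by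
    intro z hz
    induction hz using Submodule.mul_induction_on' with
    | mem_mul_mem a ha b hb =>
      have e : mon I (n+1) (a * b) (by rw [pow_succ']; exact Ideal.mul_mem_mul ha hb) =
        mon I n b hb * mon I 1 a (by simpa using ha) := by
        apply Subtype.ext
        simp [mon, monomial_mul_monomial, mul_comm]
      rw [e]
      apply Ideal.mul_mem_left
      exact Ideal.subset_span (Or.inl ⟨a, ha, rfl⟩)
    | add a ha b hb h1 h2 =>
      convert add_mem h1 h2 using 1
      apply Subtype.ext
      simp [mon]
  exact this y (by rwa [← pow_succ'])

theorem MI_eq [IsLocalRing R] (I : Ideal R) : MI I = KI I I := by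
  apply le_antisymm
  · intro f hf
    rw [mem_MI] at hf
    rw [eq_sum_mon I f]
    apply Ideal.sum_mem
    intro n _
    cases n with
    | zero => exact Ideal.subset_span (Or.inr ⟨_, hf, rfl⟩)
    | succ n => exact mon_mem _ _ _ _
  · intro f hf
    rw [mem_MI]
    exact coeff_mem_E I I le_rfl f hf 0

theorem KI_mono [IsLocalRing R] (I : Ideal R) {J J' : Ideal R} (h : J ≤ J') : KI I J ≤ KI I J' := by
  apply Ideal.span_mono
  rintro f (⟨y, hy, e⟩ | h')
  · exact Or.inl ⟨y, h hy, e⟩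
  · exact Or.inr h'

theorem isReduction_of_le [IsLocalRing R] [IsNoetherianRing R] (I J : Ideal R) (hJ : J ≤ I) (n : ℕ)
    (h : I ^ (n+1) ≤ J * I ^ n ⊔ maximalIdeal R * I ^ (n+1)) : IsReduction J I := by
  refine ⟨hJ, n, le_antisymm ?_ ?_⟩
  · exact Submodule.le_of_le_smul_of_le_jacobson_bot (IsNoetherian.noetherian _)
      (IsLocalRing.maximalIdeal_le_jacobson _) h
  · rw [pow_succ']; exact Ideal.mul_mono_left hJ

/-- Lemma C -/
theorem isReduction_of_primes [IsLocalRing R] [IsNoetherianRing R] (I J : Ideal R) (hJ : J ≤ I)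
    (h : ∀ Q : Ideal (reesAlgebra I), Q.IsPrime → Q ≤ MI I → KI I J ≤ Q → Q = MI I) :
    IsReduction J I := by
  let L := Localization.AtPrime (MI I)
  let K' : Ideal L := (KI I J).map (algebraMap _ L)
  have h1 : maximalIdeal L ≤ K'.radical := by
    rw [Ideal.radical_eq_sInf]
    refine le_sInf ?_
    rintro Q ⟨hQ, hQp⟩
    have e := h (Q.comap (algebraMap _ L)) inferInstance ?_ (Ideal.map_le_iff_le_comap.mp hQ)
    · rw [← Localization.AtPrime.map_eq_maximalIdeal, Ideal.map_le_iff_le_comap, e]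
    · exact (Ideal.comap_mono (le_maximalIdeal hQp.ne_top)).trans
        (Localization.AtPrime.under_maximalIdeal (I := MI I)).le
  obtain ⟨n, hn⟩ := K'.exists_radical_pow_le_of_fg (IsNoetherian.noetherian _)
  refine isReduction_of_le I J hJ n ?_
  intro y hy
  have hmon : ∀ n (y) (hy : y ∈ I ^ n), mon I n y hy ∈ MI I ^ n := by
    intro n
    induction n with
    | zero => simp
    | succ n ih =>
      intro y hy
      have : ∀ z (hz : z ∈ I * I ^ n), mon I (n+1) z (by rwa [pow_succ'] ) ∈ MI I ^ (n+1) := by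
        intro z hz
        induction hz using Submodule.mul_induction_on' with
        | mem_mul_mem a ha b hb =>
          have e : mon I (n+1) (a * b) (by rw [pow_succ']; exact Ideal.mul_mem_mul ha hb) =
            mon I n b hb * mon I 1 a (by simpa using ha) := by
            apply Subtype.ext
            simp [mon, monomial_mul_monomial, mul_comm]
          rw [e, pow_succ]
          apply Ideal.mul_mem_mul (ih _ _)
          rw [mem_MI]
          simp [mon, coeff_monomial]
        | add a ha b hb h1 h2 =>
          convert add_mem h1 h2 using 1
          apply Subtype.ext
          simp [mon]
      exact this y (by rwa [← pow_succ'])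
  have h2 : algebraMap _ L (mon I (n+1) y hy) ∈ K' := by
    apply hn
    apply Ideal.pow_right_mono h1
    apply Ideal.pow_le_pow_right (Nat.le_succ n)
    rw [← Localization.AtPrime.map_eq_maximalIdeal, ← Ideal.map_pow]
    exact Ideal.mem_map_of_mem _ (hmon _ _ _)
  rw [IsLocalization.algebraMap_mem_map_algebraMap_iff (MI I).primeCompl] at h2
  obtain ⟨s, hs, h3⟩ := h2
  have h4 := fun m => coeff_mem_E I J hJ _ h3 m
  have h5 := h4 (n+1)
  rw [MulMemClass.coe_mul] at h5
  have : ((s : R[X]) * (mon I (n+1) y hy : R[X])).coeff (n+1) = (s : R[X]).coeff 0 * y := by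
    simp only [mon]
    simpa using coeff_mul_monomial (s : R[X]) (n+1) 0 y
  rw [this] at h5
  have hu : IsUnit ((s : R[X]).coeff 0) := by
    by_contra hc
    exact hs ((mem_MI I s).2 hc)
  exact (Ideal.unit_mul_mem_iff_mem _ hu).1 h5

/-- Lemma D -/
theorem eq_MI_of_reduction [IsLocalRing R] (I J : Ideal R) (h : IsReduction J I)
    (Q : Ideal (reesAlgebra I)) (hQ : Q.IsPrime) (hle : KI I J ≤ Q) : Q = MI I := by
  refine ((MI_maximal I).eq_of_le hQ.ne_top ?_).symm
  rw [MI_eq]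
  unfold KI
  rw [Ideal.span_le]
  rintro f (⟨y, hy, e⟩ | h')
  · obtain ⟨hJ, n, hn⟩ := h
    apply hQ.mem_of_pow_mem (n+1)
    have : ∀ z (hz : z ∈ J * I ^ n), mon I (n+1) z (hn ▸ hz) ∈ Q := by
      intro z hz
      induction hz using Submodule.mul_induction_on' with
      | mem_mul_mem a ha b hb =>
        have e : mon I (n+1) (a * b) (hn ▸ Ideal.mul_mem_mul ha hb) =
          mon I n b hb * mon I 1 a (by simpa using hJ ha) := by
          apply Subtype.ext
          simp [mon, monomial_mul_monomial, mul_comm]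
        rw [e]
        apply Ideal.mul_mem_left
        exact hle (Ideal.subset_span (Or.inl ⟨a, ha, rfl⟩))
      | add a ha b hb h1 h2 =>
        convert add_mem h1 h2 using 1
        apply Subtype.ext
        simp [mon]
    have h2 := this (y ^ (n+1)) (hn ▸ Ideal.pow_mem_pow hy _)
    convert h2 using 1
    apply Subtype.ext
    simp [mon, e, monomial_pow]
  · exact hle (Ideal.subset_span (Or.inr h'))

theorem krull_step {S : Type*} [CommRing S] [IsNoetherianRing S] (P Q M : Ideal S) (x : S)
    [P.IsPrime] [Q.IsPrime] [M.IsPrime] (hPQ : P < Q) (hQM : Q ≤ M)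
    (hM : ∀ N : Ideal S, N.IsPrime → P ≤ N → x ∈ N → N = M) (hx : x ∈ M) : Q = M := by
  by_contra hne
  have hlt : Q < M := lt_of_le_of_ne hQM hne
  have hmin : M ∈ (P ⊔ Ideal.span {x}).minimalPrimes := by
    refine ⟨⟨inferInstance, sup_le (hPQ.le.trans hQM) (by simpa [Ideal.span_le] using hx)⟩, ?_⟩
    rintro N ⟨hN, hle⟩ _
    exact (hM N hN (le_sup_left.trans hle)
      (hle (Ideal.mem_sup_right (Ideal.mem_span_singleton_self x)))).ge
  have hh := Ideal.map_height_le_one_of_mem_minimalPrimes hmin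
  have hk : RingHom.ker (Ideal.Quotient.mk P) = P := Ideal.mk_ker
  have : (M.map (Ideal.Quotient.mk P)).IsPrime :=
    Ideal.map_isPrime_of_surjective Ideal.Quotient.mk_surjective (by rw [hk]; exact hPQ.le.trans hQM)
  have : (Q.map (Ideal.Quotient.mk P)).IsPrime :=
    Ideal.map_isPrime_of_surjective Ideal.Quotient.mk_surjective (by rw [hk]; exact hPQ.le)
  have cQ : (Q.map (Ideal.Quotient.mk P)).comap (Ideal.Quotient.mk P) = Q := by
    rw [Ideal.comap_map_of_surjective' _ Ideal.Quotient.mk_surjective, hk, sup_eq_left.2 hPQ.le]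
  have cM : (M.map (Ideal.Quotient.mk P)).comap (Ideal.Quotient.mk P) = M := by
    rw [Ideal.comap_map_of_surjective' _ Ideal.Quotient.mk_surjective, hk,
      sup_eq_left.2 (hPQ.le.trans hQM)]
  have h1 := (Ideal.height_le_iff (n := 1)).1 (by simpa using hh) (Q.map (Ideal.Quotient.mk P))
    inferInstance (lt_of_le_of_ne (Ideal.map_mono hQM) (fun e => hne (by rw [← cQ, e, cM])))
  have h0 : (Q.map (Ideal.Quotient.mk P)).height = 0 := by
    simpa [Order.lt_one_iff] using h1
  have h2 := (Ideal.height_le_iff (p := Q.map (Ideal.Quotient.mk P)) (n := 0)).1 (by simp [h0]) ⊥ Ideal.isPrime_bot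
    (bot_lt_iff_ne_bot.2 (fun e => by
      rw [e] at cQ
      rw [← RingHom.ker_eq_comap_bot, hk] at cQ
      exact hPQ.ne cQ))
  simp at h2

end GenExch

namespace GenExch
open Polynomial IsLocalRing

theorem dim_le_of_isIntegral {A B : Type*} [CommRing A] [CommRing B] (g : A →+* B)
    (hg : g.IsIntegral) : ringKrullDim B ≤ ringKrullDim A := by
  algebraize [g]
  refine Order.krullDim_le_of_strictMono (PrimeSpectrum.comap (algebraMap A B)) ?_
  intro p q hpq
  exact Ideal.IsIntegral.comap_lt_comap (R := A) (I := p.asIdeal) (J := q.asIdeal) hpq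

theorem spread_le (R : Type*) [CommRing R] [IsLocalRing R] [IsNoetherianRing R] (I : Ideal R)
    (s : ℕ) (c : Fin s → R) (hred : IsReduction (Ideal.span (Set.range c)) I) :
    analyticSpread R I ≤ s := by
  obtain ⟨hJ, N, hN⟩ := hred
  have hc : ∀ i, c i ∈ I := fun i => hJ (Ideal.subset_span ⟨i, rfl⟩)
  let φ : MvPolynomial (Fin s) R →ₐ[R] reesAlgebra I :=
    MvPolynomial.aeval (fun i => mon I 1 (c i) (by simpa using hc i))
  have hfin : φ.toRingHom.Finite := by
    letI : Algebra (MvPolynomial (Fin s) R) (reesAlgebra I) := φ.toRingHom.toAlgebra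
    have hsm : ∀ (p : MvPolynomial (Fin s) R) (x : reesAlgebra I), p • x = φ p * x :=
      fun p x => rfl
    change Module.Finite (MvPolynomial (Fin s) R) (reesAlgebra I)
    have hG : ∀ n, ∃ t : Finset R, Ideal.span (t : Set R) = I ^ n :=
      fun n => IsNoetherian.noetherian (I ^ n)
    choose G hG using hG
    let gen : (Σ n : Fin (N+1), G n) → reesAlgebra I := fun p =>
      mon I p.1 p.2 (by rw [← hG]; exact Ideal.subset_span p.2.2)
    let W : Submodule (MvPolynomial (Fin s) R) (reesAlgebra I) :=
      Submodule.span _ (Set.range gen)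
    have hRsm : ∀ (r : R) (x : reesAlgebra I), x ∈ W → r • x ∈ W := by
      intro r x hx
      have := W.smul_mem (MvPolynomial.C r) hx
      rw [hsm] at this
      convert this using 1
      have : φ (MvPolynomial.C r) = algebraMap R _ r := φ.commutes r
      rw [this, Algebra.smul_def]
    have key : ∀ n y (hy : y ∈ I ^ n), mon I n y hy ∈ W := by
      intro n
      induction n with
      | zero =>
        intro y hy
        have : ∀ z (hz : z ∈ Ideal.span (G 0 : Set R)), mon I 0 z (hG 0 ▸ hz) ∈ W := by
          intro z hz
          induction hz using Submodule.span_induction with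
          | mem x hx => exact Submodule.subset_span ⟨⟨⟨0, by omega⟩, ⟨x, hx⟩⟩, rfl⟩
          | zero => convert W.zero_mem; apply Subtype.ext; simp [mon]
          | add x y _ _ hx hy => convert add_mem hx hy using 1; apply Subtype.ext; simp [mon]
          | smul a x _ hx =>
            convert hRsm a _ hx using 1; apply Subtype.ext; simp [mon, smul_monomial]
        exact this y (hG 0 ▸ hy)
      | succ n ih =>
        intro y hy
        by_cases hn : n + 1 ≤ N
        · have : ∀ z (hz : z ∈ Ideal.span (G (n+1) : Set R)), mon I (n+1) z (hG (n+1) ▸ hz) ∈ W := by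
            intro z hz
            induction hz using Submodule.span_induction with
            | mem x hx => exact Submodule.subset_span ⟨⟨⟨n+1, by omega⟩, ⟨x, hx⟩⟩, rfl⟩
            | zero => convert W.zero_mem; apply Subtype.ext; simp [mon]
            | add x y _ _ hx hy => convert add_mem hx hy using 1; apply Subtype.ext; simp [mon]
            | smul a x _ hx =>
              convert hRsm a _ hx using 1; apply Subtype.ext; simp [mon, smul_monomial]
          exact this y (hG (n+1) ▸ hy)
        · have hn' : I ^ (n+1) = Ideal.span (Set.range c) * I ^ n := by
            obtain ⟨k, rfl⟩ := Nat.exists_eq_add_of_le (show N ≤ n by omega)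
            rw [show N + k + 1 = (N + 1) + k by ring, pow_add, hN, mul_assoc, ← pow_add]
          have hJW : ∀ a (ha : a ∈ Ideal.span (Set.range c)) (x : reesAlgebra I), x ∈ W →
              mon I 1 a (by simpa using hJ ha) * x ∈ W := by
            intro a ha x hx
            induction ha using Submodule.span_induction with
            | mem a ha =>
              obtain ⟨i, rfl⟩ := ha
              have := W.smul_mem (MvPolynomial.X i) hx
              rw [hsm] at this
              simpa [φ] using this
            | zero => convert W.zero_mem; apply Subtype.ext; simp [mon]
            | add a b _ _ h1 h2 =>
              convert add_mem h1 h2 using 1; apply Subtype.ext; simp [mon, add_mul]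
            | smul a b _ h1 =>
              convert hRsm a _ h1 using 1; apply Subtype.ext
              change monomial 1 (a * b) * (x : R[X]) = a • (monomial 1 b * (x : R[X]))
              rw [← smul_eq_mul a b, ← smul_monomial, smul_mul_assoc]
          have : ∀ z (hz : z ∈ Ideal.span (Set.range c) * I ^ n), mon I (n+1) z (hn' ▸ hz) ∈ W := by
            intro z hz
            induction hz using Submodule.mul_induction_on' with
            | mem_mul_mem a ha b hb =>
              convert hJW a ha _ (ih b hb) using 1
              apply Subtype.ext
              simp [mon, monomial_mul_monomial, add_comm]
            | add a ha b hb h1 h2 =>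
              convert add_mem h1 h2 using 1
              apply Subtype.ext
              simp [mon]
          exact this y (hn' ▸ hy)
    refine ⟨Submodule.fg_def.2 ⟨Set.range gen, Set.finite_range gen, ?_⟩⟩
    rw [eq_top_iff]
    rintro f -
    rw [eq_sum_mon I f]
    exact Submodule.sum_mem _ fun n _ => key n _ _
  let π : reesAlgebra I →+* fiberRing R I := Ideal.Quotient.mk _
  have hπ : Function.Surjective π := Ideal.Quotient.mk_surjective
  let ψ : R ⧸ maximalIdeal R →+* fiberRing R I :=
    Ideal.Quotient.lift _ (π.comp (algebraMap R (reesAlgebra I))) (by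
      intro r hr
      exact Ideal.Quotient.eq_zero_iff_mem.2 (Ideal.mem_map_of_mem _ hr))
  let g : MvPolynomial (Fin s) (R ⧸ maximalIdeal R) →+* fiberRing R I :=
    MvPolynomial.eval₂Hom ψ (fun i => π (mon I 1 (c i) (by simpa using hc i)))
  have hg : g.comp (MvPolynomial.map (Ideal.Quotient.mk (maximalIdeal R))) =
      π.comp φ.toRingHom := by
    apply MvPolynomial.ringHom_ext
    · intro r
      simp [g, φ, ψ]
      rfl
    · intro i
      simp [g, φ]
  have hgi : g.IsIntegral := by
    apply RingHom.IsIntegral.tower_top (MvPolynomial.map (Ideal.Quotient.mk (maximalIdeal R)))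
    rw [hg]
    exact RingHom.IsIntegral.trans _ _ hfin.to_isIntegral (RingHom.isIntegral_of_surjective _ hπ)
  refine (dim_le_of_isIntegral g hgi).trans ?_
  rw [MvPolynomial.ringKrullDim_of_isNoetherianRing,
    ringKrullDim_eq_zero_of_isField ((Ideal.Quotient.maximal_ideal_iff_isField_quotient _).1
      inferInstance)]
  simp

theorem minimal_of_reduction (R : Type*) [CommRing R] [IsLocalRing R] [IsNoetherianRing R]
    (I : Ideal R) (d : ℕ) (hspread : analyticSpread R I = d)
    (J : Ideal R) (c : Fin d → R) (hc : J = Ideal.span (Set.range c)) (h : IsReduction J I) :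
    IsMinimalReduction J I := by
  refine ⟨h, fun J' hJ' hle => le_antisymm hle ?_⟩
  by_contra hnot
  letI : Field (R ⧸ maximalIdeal R) := Ideal.Quotient.field _
  let V := J ⧸ (maximalIdeal R • ⊤ : Submodule R J)
  let q : J →ₗ[R] V := Submodule.mkQ _
  have hq0 : ∀ x : J, q x = 0 → (x : R) ∈ maximalIdeal R * J := by
    intro x hx
    have h1 : x ∈ (maximalIdeal R • ⊤ : Submodule R J) := (Submodule.Quotient.mk_eq_zero _).1 hx
    have h2 := Submodule.mem_map_of_mem (f := J.subtype) h1
    rw [Submodule.map_smul''] at h2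
    simpa using h2
  have hspanR : ∀ s : Set V, (Submodule.span (R ⧸ maximalIdeal R) s).restrictScalars R =
      Submodule.span R s := fun s =>
    Submodule.restrictScalars_span R (R ⧸ maximalIdeal R) Ideal.Quotient.mk_surjective s
  -- V is spanned by d elements
  have hcJ : ∀ i, c i ∈ J := fun i => hc ▸ Ideal.subset_span ⟨i, rfl⟩
  let v : Fin d → V := fun i => q ⟨c i, hcJ i⟩
  have hv : Submodule.span (R ⧸ maximalIdeal R) (Set.range v) = ⊤ := by
    rw [← Submodule.restrictScalars_eq_top_iff R, hspanR]
    have : Set.range v = q '' (Set.range fun i => (⟨c i, hcJ i⟩ : J)) := by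
      rw [← Set.range_comp]; rfl
    rw [this, ← Submodule.map_span]
    have : Submodule.span R (Set.range fun i => (⟨c i, hcJ i⟩ : J)) = ⊤ := by
      apply Submodule.map_injective_of_injective J.injective_subtype
      rw [Submodule.map_span, ← Set.range_comp]
      simp only [Submodule.map_top, Submodule.range_subtype]
      exact hc.symm
    rw [this, Submodule.map_top, Submodule.range_mkQ]
  have : Module.Finite (R ⧸ maximalIdeal R) V :=
    ⟨Submodule.fg_def.2 ⟨_, Set.finite_range v, hv⟩⟩
  have hdim : Module.finrank (R ⧸ maximalIdeal R) V ≤ d := by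
    have := finrank_range_le_card (R := R ⧸ maximalIdeal R) v
    rw [Set.finrank, hv, finrank_top] at this
    simpa using this
  let T : Set V := q '' {x | (x : R) ∈ J'}
  obtain ⟨B, hBT, hBspan, hBli⟩ := exists_linearIndependent (R ⧸ maximalIdeal R) T
  have hBfin : B.Finite := hBli.setFinite
  have hlt : Submodule.span (R ⧸ maximalIdeal R) T < ⊤ := by
    rw [lt_top_iff_ne_top]
    intro htop
    apply hnot
    apply Submodule.le_of_le_smul_of_le_jacobson_bot (I := maximalIdeal R)
      (IsNoetherian.noetherian _) (IsLocalRing.maximalIdeal_le_jacobson _)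
    intro x hx
    rw [← Submodule.restrictScalars_eq_top_iff R, hspanR] at htop
    have hx' : q ⟨x, hx⟩ ∈ Submodule.span R T := by rw [htop]; trivial
    have hT : T = q '' ((Submodule.comap J.subtype J' : Submodule R J) : Set J) := rfl
    rw [hT, ← Submodule.map_span, Submodule.span_eq] at hx'
    obtain ⟨z, hz, e⟩ := hx'
    have h1 := hq0 (⟨x, hx⟩ - z) (by rw [map_sub, e, sub_self])
    have : x = (z : R) + (x - z) := by ring
    rw [this]
    exact Submodule.add_mem_sup hz h1
  have := hBfin.fintype
  have hcard : Fintype.card B < d := by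
    have h1 := finrank_span_set_eq_card (R := R ⧸ maximalIdeal R) hBli
    have h2 := Submodule.finrank_lt (K := R ⧸ maximalIdeal R) hlt.ne
    rw [← hBspan, h1, Set.toFinset_card] at h2
    omega
  have hlift : ∀ b : B, ∃ x : J, (x : R) ∈ J' ∧ q x = b := fun b => hBT b.2
  choose l hl1 hl2 using hlift
  let e := (Fintype.equivFin B).symm
  let c' : Fin (Fintype.card B) → R := fun i => (l (e i) : R)
  have hle'' : Ideal.span (Set.range c') ≤ J' := by
    rw [Ideal.span_le]; rintro _ ⟨i, rfl⟩; exact hl1 _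
  have hJ'le : J' ≤ Ideal.span (Set.range c') ⊔ maximalIdeal R * J := by
    intro x hx
    have hxT : q ⟨x, hle hx⟩ ∈ Submodule.span R B := by
      rw [← hspanR, hBspan]
      exact Submodule.subset_span ⟨_, hx, rfl⟩
    have hB : B = q '' Set.range l := by
      rw [← Set.range_comp]
      ext b
      constructor
      · intro hb; exact ⟨⟨b, hb⟩, hl2 _⟩
      · rintro ⟨b, rfl⟩; simp [hl2]
    rw [hB, ← Submodule.map_span] at hxT
    obtain ⟨z, hz, ez⟩ := hxT
    have h1 := hq0 (⟨x, hle hx⟩ - z) (by rw [map_sub, ez, sub_self])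
    have : x = (z : R) + (x - z) := by ring
    rw [this]
    refine Submodule.add_mem_sup ?_ h1
    have h3 := Submodule.mem_map_of_mem (f := J.subtype) hz
    rw [Submodule.map_span] at h3
    refine Submodule.span_mono ?_ h3
    rintro _ ⟨_, ⟨b, rfl⟩, rfl⟩
    exact ⟨e.symm b, by simp [c']⟩
  have hred : IsReduction (Ideal.span (Set.range c')) I := by
    obtain ⟨hJI, n, hn⟩ := hJ'
    refine isReduction_of_le I _ (hle''.trans hJI) n ?_
    conv_lhs => rw [hn]
    refine (Ideal.mul_mono_left hJ'le).trans ?_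
    rw [Ideal.sup_mul]
    refine sup_le_sup le_rfl ?_
    rw [mul_assoc, pow_succ']
    exact Ideal.mul_mono_right (Ideal.mul_mono_left h.1)
  have := spread_le R I _ c' hred
  rw [hspread] at this
  have : d ≤ Fintype.card B := by exact_mod_cast this
  omega

theorem union_ne {R : Type*} [CommRing R] [IsLocalRing R] [Infinite (ResidueField R)]
    (B : Ideal R) {ι : Type*} [Finite ι] (J : ι → Ideal R)
    (h2 : ∀ i, ¬ B ≤ J i) :
    ¬ (B : Set R) ⊆ ⋃ i, (J i : Set R) := by
  intro hcov
  have := Fintype.ofFinite ι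
  obtain ⟨i, -, hi⟩ := Submodule.exists_finiteIndex_of_cover (R := R) (M := B)
    (p := fun i => Submodule.comap B.subtype (J i)) (s := Finset.univ) (by
      rw [Set.eq_univ_iff_forall]
      intro x
      obtain ⟨_, ⟨i, rfl⟩, hx⟩ := hcov x.2
      simp only [Set.mem_iUnion]
      exact ⟨i, Finset.mem_univ _, hx⟩)
  have hfin : Finite (↥B ⧸ (Submodule.comap B.subtype (J i) : Submodule R B)) :=
    AddSubgroup.finite_quotient_of_finiteIndex
  obtain ⟨y, hyB, hyJ⟩ := Set.not_subset.1 (h2 i)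
  let f : R →ₗ[R] (↥B ⧸ (Submodule.comap B.subtype (J i) : Submodule R B)) :=
    LinearMap.toSpanSingleton R _ (Submodule.Quotient.mk ⟨y, hyB⟩)
  have hf : ∀ r, f r = 0 → r ∈ maximalIdeal R := by
    intro r hr
    by_contra hru
    have hu : IsUnit r := by simpa using hru
    have : r * y ∈ J i := by
      have : Submodule.Quotient.mk (p := (Submodule.comap B.subtype (J i) : Submodule R B))
        (r • (⟨y, hyB⟩ : B)) = 0 := hr
      rw [Submodule.Quotient.mk_eq_zero] at this
      exact this
    exact hyJ ((Ideal.unit_mul_mem_iff_mem _ hu).1 this)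
  have hinj : ∃ g : ResidueField R → (↥B ⧸ (Submodule.comap B.subtype (J i) : Submodule R B)),
      Function.Injective g := by
    refine ⟨fun z => f (Function.surjInv residue_surjective z), ?_⟩
    intro z w hzw
    have h3 := hf (Function.surjInv residue_surjective z - Function.surjInv residue_surjective w)
      (by rw [map_sub]; exact sub_eq_zero.2 hzw)
    have h4 : residue R _ = 0 := (residue_eq_zero_iff _).2 h3
    rw [map_sub, Function.surjInv_eq residue_surjective, Function.surjInv_eq residue_surjective] at h4
    exact sub_eq_zero.1 h4
  obtain ⟨g, hg⟩ := hinj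
  have := Finite.of_injective g hg
  exact not_finite (ResidueField R)

end GenExch
/-- Generic exchange for minimal reductions: given minimal reductions
`𝔞 = (a₁,…,a_d)` and `𝔟 = (b₁,…,b_d)` of `I` (`d = ℓ(I) > 0`), there are
finitely many ideals `Jᵢ` with `𝔪𝔟 ⊆ Jᵢ ⊆ 𝔟` whose union is a proper subset of
`𝔟`, such that for `b ∈ 𝔟`, `(a₁,…,a_{d-1},b)` is a minimal reduction of `I`
iff `b ∉ ⋃ Jᵢ`. -/
theorem generic_exchange_minimal_reductions (R : Type*) [CommRing R]
    [IsNoetherianRing R] [IsLocalRing R] [Infinite (IsLocalRing.ResidueField R)]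
    (I : Ideal R) (hI : I ≠ ⊤) (d : ℕ) (hd : 0 < d)
    (hspread : analyticSpread R I = d)
    (a b : Fin d → R)
    (ha : IsMinimalReduction (Ideal.span (Set.range a)) I)
    (hb : IsMinimalReduction (Ideal.span (Set.range b)) I) :
    ∃ (r : ℕ) (J : Fin r → Ideal R),
      (∀ i, IsLocalRing.maximalIdeal R * Ideal.span (Set.range b) ≤ J i ∧
        J i ≤ Ideal.span (Set.range b)) ∧
      (⋃ i, (J i : Set R)) ⊂ (Ideal.span (Set.range b) : Set R) ∧
      ∀ x ∈ Ideal.span (Set.range b),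
        (IsMinimalReduction
            (Ideal.span (insert x (a '' {i : Fin d | (i : ℕ) + 1 < d}))) I
          ↔ x ∉ ⋃ i, (J i : Set R)) := by
  classical
  obtain ⟨haI, -⟩ := ha.1
  have hbI := hb.1.1
  set 𝔟 := Ideal.span (Set.range b) with h𝔟
  set A0 : Set R := a '' {i : Fin d | (i : ℕ) + 1 < d} with hA0
  have hA0I : Ideal.span A0 ≤ I :=
    (Ideal.span_mono (Set.image_subset_range _ _)).trans haI
  let M := GenExch.MI I
  let K0 := GenExch.KI I (Ideal.span A0)
  let ι := {P : Ideal (reesAlgebra I) // P ∈ K0.minimalPrimes ∧ P < M}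
  have hfin : Finite ι :=
    (K0.finite_minimalPrimes_of_isNoetherianRing.subset
      (fun P (hP : P ∈ K0.minimalPrimes ∧ P < M) => hP.1)).to_subtype
  have h1 : ∀ {x}, x ∈ 𝔟 → x ∈ I ^ 1 := fun hx => by simpa using hbI hx
  let J : ι → Ideal R := fun P =>
    { carrier := {x | x ∈ 𝔟 ∧ ∀ hx : x ∈ I ^ 1, GenExch.mon I 1 x hx ∈ P.1}
      zero_mem' := ⟨zero_mem _, fun hx => by
        convert P.1.zero_mem; apply Subtype.ext; simp [GenExch.mon]⟩
      add_mem' := by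
        rintro x y ⟨hx, hx'⟩ ⟨hy, hy'⟩
        refine ⟨add_mem hx hy, fun _ => ?_⟩
        convert add_mem (hx' (h1 hx)) (hy' (h1 hy)) using 1
        apply Subtype.ext; simp [GenExch.mon]
      smul_mem' := by
        rintro r x ⟨hx, hx'⟩
        refine ⟨Ideal.mul_mem_left _ _ hx, fun _ => ?_⟩
        convert P.1.mul_mem_left (algebraMap R _ r) (hx' (h1 hx)) using 1
        apply Subtype.ext
        simp [GenExch.mon, Polynomial.C_mul_monomial] }
  have hJmem : ∀ P x, x ∈ J P ↔ x ∈ 𝔟 ∧ ∀ hx : x ∈ I ^ 1, GenExch.mon I 1 x hx ∈ P.1 :=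
    fun P x => Iff.rfl
  have hP0 : ∀ (P : ι), K0 ≤ P.1 := fun P => P.2.1.1.2
  have hm : ∀ (P : ι) (r : R), r ∈ IsLocalRing.maximalIdeal R →
      algebraMap R (reesAlgebra I) r ∈ P.1 := fun P r hr =>
    hP0 P (Ideal.subset_span (Or.inr ⟨r, hr, rfl⟩))
  have hJle : ∀ P, J P ≤ 𝔟 := fun P x hx => hx.1
  have hJm : ∀ P, IsLocalRing.maximalIdeal R * 𝔟 ≤ J P := by
    intro P
    rw [Ideal.mul_le]
    intro r hr x hx
    refine ⟨Ideal.mul_mem_left _ _ hx, fun _ => ?_⟩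
    convert P.1.mul_mem_right (GenExch.mon I 1 x (h1 hx)) (hm P r hr) using 1
    apply Subtype.ext
    simp [GenExch.mon, Polynomial.C_mul_monomial]
  have hKle : ∀ (P : Ideal (reesAlgebra I)) (B : Ideal R) (s : Set R), B = Ideal.span s → K0 ≤ P →
      (∀ f : reesAlgebra I, ∀ x ∈ s, (f : Polynomial R) = Polynomial.monomial 1 x → f ∈ P) →
      B ≤ I → GenExch.KI I B ≤ P := by
    intro P B s hB hK hs hBI
    subst hB
    unfold GenExch.KI
    rw [Ideal.span_le]
    rintro f (⟨y, hy, e⟩ | h')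
    · have hall : ∀ z (hz : z ∈ Ideal.span s),
          GenExch.mon I 1 z (by simpa using hBI hz) ∈ P := by
        intro z hz
        induction hz using Submodule.span_induction with
        | mem x hx => exact hs _ x hx rfl
        | zero => convert P.zero_mem; apply Subtype.ext; simp [GenExch.mon]
        | add x y _ _ hx hy =>
          convert add_mem hx hy using 1; apply Subtype.ext; simp [GenExch.mon]
        | smul r x _ hx =>
          convert P.mul_mem_left (algebraMap R _ r) hx using 1
          apply Subtype.ext
          simp [GenExch.mon, Polynomial.C_mul_monomial]
      have hfe : f = GenExch.mon I 1 y (by simpa using hBI hy) := Subtype.ext e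
      rw [hfe]
      exact hall y hy
    · exact hK (Ideal.subset_span (Or.inr h'))
  have hprop : ∀ P, ¬ 𝔟 ≤ J P := by
    intro P hle
    have hPp : P.1.IsPrime := P.2.1.1.1
    refine P.2.2.ne (GenExch.eq_MI_of_reduction I 𝔟 hb.1 P.1 hPp ?_)
    refine hKle P.1 𝔟 𝔟 (Ideal.span_eq 𝔟).symm (hP0 P) ?_ hbI
    intro f x hx e
    convert (hle hx).2 (h1 hx) using 1
    exact Subtype.ext e
  have hiff : ∀ x ∈ 𝔟, (IsMinimalReduction (Ideal.span (insert x A0)) I ↔ ∀ P, x ∉ J P) := by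
    intro x hx
    have hxI : Ideal.span (insert x A0) ≤ I := by
      rw [Ideal.span_insert]
      exact sup_le ((Ideal.span_singleton_le_iff_mem _).2 (hbI hx)) hA0I
    constructor
    · rintro ⟨hred, -⟩ P hxP
      have hPp : P.1.IsPrime := P.2.1.1.1
      refine P.2.2.ne (GenExch.eq_MI_of_reduction I _ hred P.1 hPp ?_)
      refine hKle P.1 _ _ rfl (hP0 P) ?_ hxI
      rintro f y (rfl | hy) e
      · convert hxP.2 (h1 hx) using 1
        exact Subtype.ext e
      · exact hP0 P (Ideal.subset_span (Or.inl ⟨y, Ideal.subset_span hy, e⟩))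
    · intro hxP
      refine GenExch.minimal_of_reduction R I d hspread _
        (fun i => if (i : ℕ) + 1 < d then a i else x) ?_ ?_
      · congr 1
        ext y
        constructor
        · rintro (rfl | ⟨i, hi, rfl⟩)
          · exact ⟨⟨d - 1, by omega⟩, if_neg (by simp only; omega)⟩
          · exact ⟨i, if_pos hi⟩
        · rintro ⟨i, rfl⟩
          by_cases hi : (i : ℕ) + 1 < d
          · simp only [hi, if_true]
            exact Or.inr ⟨i, hi, rfl⟩
          · simp only [hi, if_false]
            exact Or.inl rfl
      · refine GenExch.isReduction_of_primes I _ hxI ?_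
        intro Q hQ hQM hKQ
        have hK0Q : K0 ≤ Q := (GenExch.KI_mono I (Ideal.span_mono (Set.subset_insert _ _))).trans hKQ
        obtain ⟨P, hPmin, hPQ⟩ := Ideal.exists_minimalPrimes_le hK0Q
        have hPp : P.IsPrime := hPmin.1.1
        by_cases hPM : P = M
        · exact le_antisymm hQM (hPM.symm.le.trans hPQ)
        · have hPltM : P < M := lt_of_le_of_ne (hPQ.trans hQM) hPM
          have hxnot := hxP ⟨P, hPmin, hPltM⟩
          have hPltQ : P < Q := by
            refine lt_of_le_of_ne hPQ ?_
            rintro rfl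
            exact hxnot ⟨hx, fun _ => hKQ (Ideal.subset_span
              (Or.inl ⟨x, Ideal.subset_span (Set.mem_insert _ _), rfl⟩))⟩
          let l : Fin d := ⟨d - 1, by omega⟩
          have hal : a l ∈ I := haI (Ideal.subset_span ⟨l, rfl⟩)
          refine GenExch.krull_step P Q M (GenExch.mon I 1 (a l) (by simpa using hal)) hPltQ hQM
            ?_ ?_
          · intro N hN hPN hxN
            refine GenExch.eq_MI_of_reduction I _ ha.1 N hN ?_
            refine hKle N _ _ rfl (hPmin.1.2.trans hPN) ?_ haI
            rintro f _ ⟨i, rfl⟩ e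
            by_cases hi : (i : ℕ) + 1 < d
            · exact hPN (hPmin.1.2 (Ideal.subset_span
                (Or.inl ⟨a i, Ideal.subset_span ⟨i, hi, rfl⟩, e⟩)))
            · have : i = l := by apply Fin.ext; simp only [l]; omega
              subst this
              convert hxN using 1
              exact Subtype.ext e
          · rw [GenExch.mem_MI]
            simp [GenExch.mon, Polynomial.coeff_monomial]
  let e := (Finite.equivFin ι).symm
  have hU : (⋃ i, ((J ∘ e) i : Set R)) = ⋃ P, (J P : Set R) := e.surjective.iUnion_comp (fun P => (J P : Set R))
  refine ⟨Nat.card ι, J ∘ e, fun i => ⟨hJm _, hJle _⟩, ?_, ?_⟩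
  · rw [hU]
    exact ⟨Set.iUnion_subset hJle, GenExch.union_ne 𝔟 J hprop⟩
  · intro x hx
    rw [hU, hiff x hx]
    simp
end

section
/- Let (R, 𝔪, k) be a Noetherian local ring with infinite residue field, I a proper ideal with analytic spread d > 0, and 𝔞 = (a₁,...,a_d), 𝔟 = (b₁,...,b_d) minimal reductions of I. Then there exists an element b ∈ 𝔟 such that (a₁,...,a_{d-1}, b) is a minimal reduction of I. -/
section helpers

open Polynomial IsLocalRing

variable {R : Type*} [CommRing R]

lemma isReduction_of_nakayama [IsNoetherianRing R] [IsLocalRing R] {J I : Ideal R} (hJ : J ≤ I)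
    (n : ℕ) (h : I ^ (n + 1) ≤ J * I ^ n ⊔ maximalIdeal R * I ^ (n + 1)) : IsReduction J I := by
  refine ⟨hJ, n, le_antisymm ?_ ?_⟩
  · exact Submodule.le_of_le_smul_of_le_jacobson_bot (IsNoetherian.noetherian _)
      (IsLocalRing.maximalIdeal_le_jacobson _) h
  · rw [pow_succ']
    exact Ideal.mul_mono_left hJ

/-- The homogeneous element of the Rees algebra. -/
noncomputable def reesMon (I : Ideal R) (j : ℕ) (r : R) (hr : r ∈ I ^ j) : reesAlgebra I :=
  ⟨monomial j r, reesAlgebra.monomial_mem.mpr hr⟩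

/-- The polynomial ring mapping to the Rees algebra. -/
noncomputable def polyToRees {ι : Type*} (I : Ideal R) (c : ι → R) (hc : ∀ i, c i ∈ I) :
    MvPolynomial ι R →ₐ[R] reesAlgebra I :=
  MvPolynomial.aeval (fun i => reesMon I 1 (c i) (by simpa using hc i))

lemma polyToRees_finite [IsNoetherianRing R] {ι : Type*} (I : Ideal R) (c : ι → R)
    (hc : ∀ i, c i ∈ I)
    (n : ℕ) (h : I ^ (n + 1) = Ideal.span (Set.range c) * I ^ n) :
    (polyToRees I c hc).toRingHom.Finite := by
  classical
  let φ := polyToRees I c hc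
  let : Algebra (MvPolynomial ι R) (reesAlgebra I) := φ.toRingHom.toAlgebra
  have hsm : ∀ (p : MvPolynomial ι R) (y : reesAlgebra I), p • y = φ p * y := fun p y => rfl
  change Module.Finite (MvPolynomial ι R) (reesAlgebra I)
  have hfg : ∀ j : ℕ, (I ^ j).FG := fun j => IsNoetherian.noetherian _
  choose s hs using hfg
  have hsI : ∀ j, ∀ r ∈ s j, r ∈ I ^ j := fun j r hr => by
    rw [← hs j]; exact Submodule.subset_span hr
  let T : Finset (reesAlgebra I) := (Finset.range (n + 1)).biUnion
    (fun j => (s j).attach.image (fun r => reesMon I j r.1 (hsI j r.1 r.2)))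
  let N : Submodule (MvPolynomial ι R) (reesAlgebra I) := Submodule.span _ (T : Set (reesAlgebra I))
  have hC : ∀ (r : R) (y : reesAlgebra I), y ∈ N → r • y ∈ N := by
    intro r y hy
    have : r • y = (MvPolynomial.C r : MvPolynomial ι R) • y := by
      rw [hsm]
      have : φ (MvPolynomial.C r) = algebraMap R _ r := φ.commutes r
      rw [this, Algebra.smul_def]
    rw [this]; exact N.smul_mem _ hy
  have hlow : ∀ j ≤ n, ∀ r (hr : r ∈ I ^ j), reesMon I j r hr ∈ N := by
    intro j hj r hr
    have hr' : r ∈ Submodule.span R (s j : Set R) :=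
      show r ∈ Ideal.span _ from (hs j).symm ▸ hr
    suffices ∀ r ∈ Submodule.span R (s j : Set R), ∀ (hr : r ∈ I ^ j), reesMon I j r hr ∈ N from
      this r hr' hr
    intro r hr
    induction hr using Submodule.span_induction with
    | mem x hx =>
      intro hr
      apply Submodule.subset_span
      simp only [T, Finset.coe_biUnion, Set.mem_iUnion, Finset.coe_image]
      exact ⟨j, by simp; omega, ⟨⟨x, hx⟩, by simp, rfl⟩⟩
    | zero =>
      intro hr
      have : reesMon I j 0 hr = 0 := by ext1; simp [reesMon]
      rw [this]; exact N.zero_mem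
    | add x y hx hy hx' hy' =>
      intro hr
      have hxI : x ∈ I ^ j := by rw [← hs j]; exact hx
      have hyI : y ∈ I ^ j := by rw [← hs j]; exact hy
      have : reesMon I j (x + y) hr = reesMon I j x hxI + reesMon I j y hyI := by
        ext1; simp [reesMon]
      rw [this]; exact N.add_mem (hx' _) (hy' _)
    | smul t x hx hx' =>
      intro hr
      have hxI : x ∈ I ^ j := by rw [← hs j]; exact hx
      have : reesMon I j (t • x) hr = t • reesMon I j x hxI := by
        ext1; simp [reesMon, smul_monomial]
      rw [this]; exact hC _ _ (hx' _)
  have hall : ∀ j, ∀ r (hr : r ∈ I ^ j), reesMon I j r hr ∈ N := by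
    intro j
    induction j with
    | zero => exact hlow 0 (Nat.zero_le _)
    | succ j ih =>
      by_cases hj : j + 1 ≤ n
      · exact hlow _ hj
      have hpow : I ^ (j + 1) = Ideal.span (Set.range c) * I ^ j := by
        obtain ⟨t, rfl⟩ : ∃ t, j = n + t := ⟨j - n, by omega⟩
        rw [show n + t + 1 = (n + 1) + t by omega, pow_add, h, mul_assoc, ← pow_add]
      suffices ∀ r ∈ Ideal.span (Set.range c) * I ^ j, ∀ (hr : r ∈ I ^ (j + 1)),
          reesMon I (j + 1) r hr ∈ N from fun r hr => this r (hpow ▸ hr) hr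
      intro r hr
      induction hr using Submodule.mul_induction_on' with
      | add x hx y hy hx' hy' =>
        intro hr
        have hxI : x ∈ I ^ (j + 1) := by rw [hpow]; exact hx
        have hyI : y ∈ I ^ (j + 1) := by rw [hpow]; exact hy
        have : reesMon I (j + 1) (x + y) hr = reesMon I _ x hxI + reesMon I _ y hyI := by
          ext1; simp [reesMon]
        rw [this]; exact N.add_mem (hx' _) (hy' _)
      | mem_mul_mem x hx y hy =>
        induction hx using Submodule.span_induction with
        | mem x hx =>
          obtain ⟨i, rfl⟩ := hx
          intro hr
          have : reesMon I (j + 1) (c i * y) hr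
              = (MvPolynomial.X i : MvPolynomial ι R) • reesMon I j y hy := by
            rw [hsm]
            ext1
            simp [φ, polyToRees, reesMon, monomial_mul_monomial, add_comm]
          rw [this]; exact N.smul_mem _ (ih _ _)
        | zero =>
          intro hr
          have : reesMon I (j + 1) (0 * y) hr = 0 := by ext1; simp [reesMon]
          rw [this]; exact N.zero_mem
        | add u v hu hv hu' hv' =>
          intro hr
          have huI : u * y ∈ I ^ (j + 1) := by rw [hpow]; exact Ideal.mul_mem_mul hu hy
          have hvI : v * y ∈ I ^ (j + 1) := by rw [hpow]; exact Ideal.mul_mem_mul hv hy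
          have : reesMon I (j + 1) ((u + v) * y) hr = reesMon I _ _ huI + reesMon I _ _ hvI := by
            ext1; simp [reesMon, add_mul]
          rw [this]; exact N.add_mem (hu' _) (hv' _)
        | smul t x hx hx' =>
          intro hr
          have hxI : x * y ∈ I ^ (j + 1) := by rw [hpow]; exact Ideal.mul_mem_mul hx hy
          have : reesMon I (j + 1) ((t • x) * y) hr = t • reesMon I _ _ hxI := by
            ext1; simp [reesMon, smul_monomial, mul_assoc]
          rw [this]; exact hC _ _ (hx' _)
  refine ⟨⟨T, ?_⟩⟩
  rw [eq_top_iff]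
  rintro ⟨p, hp⟩ -
  have : (⟨p, hp⟩ : reesAlgebra I) = ∑ j ∈ p.support, reesMon I j (p.coeff j) (hp j) := by
    ext1
    rw [AddSubmonoidClass.coe_finsetSum]
    exact p.as_sum_support
  rw [this]
  exact N.sum_mem fun j _ => hall _ _ _

lemma ringKrullDim_le_of_finite' {A B : Type*} [CommRing A] [CommRing B] (f : A →+* B)
    (hf : f.Finite) : ringKrullDim B ≤ ringKrullDim A := by
  let := f.toAlgebra
  have : Algebra.IsIntegral A B := ⟨hf.to_isIntegral⟩
  refine Order.krullDim_le_of_strictMono (PrimeSpectrum.comap f) ?_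
  intro p q hpq
  exact Ideal.comap_lt_comap_of_integral_mem_sdiff (R := A) (le_of_lt hpq)
    (Set.exists_of_ssubset hpq).choose_spec (Algebra.IsIntegral.isIntegral _)

lemma ringKrullDim_fiber_quotient_le [IsLocalRing R] {S : Type*} [CommRing S] [Algebra R S]
    {m : ℕ} (φ : MvPolynomial (Fin m) R →ₐ[R] S) (hfin : φ.toRingHom.Finite) :
    ringKrullDim (S ⧸ Ideal.map (algebraMap R S) (maximalIdeal R)) ≤ m := by
  generalize hQ : Ideal.map (algebraMap R S) (maximalIdeal R) = Q
  let q : S →+* S ⧸ Q := Ideal.Quotient.mk Q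
  have hq : (q.comp φ.toRingHom).Finite :=
    (RingHom.Finite.of_surjective q Ideal.Quotient.mk_surjective).comp hfin
  let g0 : ResidueField R →+* S ⧸ Q :=
    Ideal.Quotient.lift (maximalIdeal R) (q.comp (algebraMap R S)) (fun a ha =>
      Ideal.Quotient.eq_zero_iff_mem.mpr (hQ ▸ Ideal.mem_map_of_mem _ ha))
  let g : MvPolynomial (Fin m) (ResidueField R) →+* S ⧸ Q :=
    MvPolynomial.eval₂Hom g0 (fun i => q (φ (MvPolynomial.X i)))
  have hg : g.comp (MvPolynomial.map (IsLocalRing.residue R)) = q.comp φ.toRingHom := by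
    apply MvPolynomial.ringHom_ext
    · intro r
      simp only [g, RingHom.comp_apply, MvPolynomial.map_C, MvPolynomial.eval₂Hom_C]
      have : φ.toRingHom (MvPolynomial.C r) = algebraMap R _ r := φ.commutes r
      rw [this]
      rfl
    · intro i
      simp [g]
  have hgfin : g.Finite := RingHom.Finite.of_comp_finite (hg ▸ hq)
  have h1 := ringKrullDim_le_of_finite' g hgfin
  rw [MvPolynomial.ringKrullDim_of_isNoetherianRing, ringKrullDim_eq_zero_of_field] at h1
  simpa using h1

lemma analyticSpread_le [IsNoetherianRing R] [IsLocalRing R] {I : Ideal R} {m : ℕ} (c : Fin m → R)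
    (h : IsReduction (Ideal.span (Set.range c)) I) : analyticSpread R I ≤ m := by
  obtain ⟨hle, n, hn⟩ := h
  have hc : ∀ i, c i ∈ I := fun i => hle (Ideal.subset_span ⟨i, rfl⟩)
  exact ringKrullDim_fiber_quotient_le (polyToRees I c hc) (polyToRees_finite I c hc n hn)

lemma isMinimal_of_isReduction [IsNoetherianRing R] [IsLocalRing R] {I : Ideal R} {d : ℕ}
    (hs : analyticSpread R I = d) (c : Fin d → R)
    (h : IsReduction (Ideal.span (Set.range c)) I) :
    IsMinimalReduction (Ideal.span (Set.range c)) I := by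
  refine ⟨h, fun J' hJ' hle => ?_⟩
  by_contra hne
  set J := Ideal.span (Set.range c) with hJ
  have hnot : ¬ (∀ i, c i ∈ J' ⊔ maximalIdeal R * J) := by
    intro hall
    apply hne
    refine le_antisymm hle ?_
    refine Submodule.le_of_le_smul_of_le_jacobson_bot (I := maximalIdeal R)
      (IsNoetherian.noetherian _) (IsLocalRing.maximalIdeal_le_jacobson _) ?_
    rw [hJ, Ideal.span_le]
    rintro _ ⟨i, rfl⟩
    exact hall i
  let L : (Fin d → R) →ₗ[R] R := Fintype.linearCombination R c
  have hL : ∀ v, L v = ∑ i, v i * c i := fun v => by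
    simp [L, Fintype.linearCombination_apply]
  let U : Submodule R (Fin d → R) := Submodule.comap L (J' ⊔ maximalIdeal R * J)
  let π : (Fin d → R) →ₛₗ[IsLocalRing.residue R] (Fin d → ResidueField R) :=
    { toFun := fun v i => IsLocalRing.residue R (v i)
      map_add' := fun v w => by ext; simp
      map_smul' := fun v w => by ext; simp }
  have hker : ∀ v, π v = 0 → L v ∈ maximalIdeal R * J := by
    intro v hv
    rw [hL]
    refine Ideal.sum_mem _ fun i _ => Ideal.mul_mem_mul ?_ (Ideal.subset_span ⟨i, rfl⟩)
    exact (IsLocalRing.residue_eq_zero_iff _).mp (congrFun hv i)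
  have : RingHomSurjective (IsLocalRing.residue R) := ⟨IsLocalRing.residue_surjective⟩
  let W : Submodule (ResidueField R) (Fin d → ResidueField R) := U.map π
  have hW : W ≠ ⊤ := by
    intro htop
    apply hnot
    intro i
    have : π (Pi.single i 1) ∈ W := by rw [htop]; trivial
    obtain ⟨u, hu, hui⟩ := this
    have h1 : L u ∈ J' ⊔ maximalIdeal R * J := hu
    have h2 := hker (Pi.single i 1 - u) (by rw [map_sub, hui, sub_self])
    have h3 : L (Pi.single i 1) = c i := by
      rw [hL]; simp [Pi.single_apply]
    rw [map_sub, h3] at h2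
    have := add_mem h1 (Ideal.mem_sup_right (S := J') h2)
    simpa using this
  have hlt : Module.finrank (ResidueField R) W < d := by
    have := Submodule.finrank_lt hW
    simpa using this
  set m := Module.finrank (ResidueField R) W with hm
  let B := Module.finBasis (ResidueField R) W
  have hBex : ∀ j : Fin m, ∃ x ∈ J', ∃ u : Fin d → R, π u = (B j : Fin d → ResidueField R) ∧
      L u - x ∈ maximalIdeal R * J := by
    intro j
    obtain ⟨u, hu, hui⟩ := (B j).2
    obtain ⟨x, hx, y, hy, hxy⟩ := Submodule.mem_sup.mp (show L u ∈ J' ⊔ maximalIdeal R * J from hu)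
    exact ⟨x, hx, u, hui, by rw [← hxy]; simpa using hy⟩
  choose c' hc' u hu hcu using hBex
  have hkey : J' ≤ Ideal.span (Set.range c') ⊔ maximalIdeal R * J := by
    intro x hx
    have hxJ : x ∈ J := hle hx
    obtain ⟨v, hv⟩ := (Submodule.mem_span_range_iff_exists_fun R).mp hxJ
    have hLv : L v = x := by rw [hL]; simpa using hv
    have hvW : π v ∈ W := ⟨v, show L v ∈ J' ⊔ maximalIdeal R * J by rw [hLv]; exact Ideal.mem_sup_left hx, rfl⟩
    have hrep := B.sum_repr ⟨π v, hvW⟩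
    choose t ht using fun j => IsLocalRing.residue_surjective (B.repr ⟨π v, hvW⟩ j)
    have h2 := hker (v - ∑ j, t j • u j) (by
      rw [map_sub, map_sum, sub_eq_zero]
      have := congrArg (Subtype.val) hrep
      rw [AddSubmonoidClass.coe_finsetSum] at this
      rw [← show _ = π v from this]
      refine Finset.sum_congr rfl fun j _ => ?_
      rw [map_smulₛₗ, ht, hu]
      rfl)
    rw [map_sub, hLv, map_sum] at h2
    have h3 : ∑ j, t j * (L (u j) - c' j) ∈ maximalIdeal R * J :=
      Ideal.sum_mem _ fun j _ => Ideal.mul_mem_left _ _ (hcu j)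
    have h4 : ∑ j, t j * c' j ∈ Ideal.span (Set.range c') :=
      Ideal.sum_mem _ fun j _ => Ideal.mul_mem_left _ _ (Ideal.subset_span ⟨j, rfl⟩)
    have h5 : x = ∑ j, t j * c' j + ((x - ∑ j, L (t j • u j)) + ∑ j, t j * (L (u j) - c' j)) := by
      simp only [map_smul, smul_eq_mul, mul_sub, Finset.sum_sub_distrib]
      ring
    rw [h5]
    exact add_mem (Ideal.mem_sup_left h4) (Ideal.mem_sup_right (add_mem h2 h3))
  have hred : IsReduction (Ideal.span (Set.range c')) I := by
    obtain ⟨hJI, n, hn⟩ := hJ'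
    refine isReduction_of_nakayama ?_ n ?_
    · rw [Ideal.span_le]
      rintro _ ⟨j, rfl⟩
      exact hJI (hc' j)
    · calc I ^ (n + 1) = J' * I ^ n := hn
        _ ≤ (Ideal.span (Set.range c') ⊔ maximalIdeal R * J) * I ^ n := Ideal.mul_mono_left hkey
        _ = Ideal.span (Set.range c') * I ^ n ⊔ maximalIdeal R * (J * I ^ n) := by
          rw [Ideal.sup_mul, mul_assoc]
        _ ≤ _ := by
          refine sup_le_sup_left (Ideal.mul_mono_right ?_) _
          rw [pow_succ']
          exact Ideal.mul_mono_left h.1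
  have := analyticSpread_le c' hred
  rw [hs] at this
  have : d ≤ m := by exact_mod_cast this
  omega


lemma exists_generic_unit [IsLocalRing R] [Infinite (ResidueField R)]
    {S : Type*} [CommRing S] [Algebra R S] {d : ℕ} (φ : MvPolynomial (Fin d) R →ₐ[R] S)
    (hfin : φ.toRingHom.Finite) (l : Fin d) (β : Fin d → S) (N : ℕ)
    (hβ : φ (MvPolynomial.X l) ^ N ∈ Ideal.span (Set.range β)) :
    ∃ v : Fin d → R, (1 : S) ∈ (Ideal.map (algebraMap R S) (maximalIdeal R) ⊔
      Ideal.span ((fun i => φ (MvPolynomial.X i)) '' {i | i ≠ l}) ⊔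
      Ideal.span {φ (MvPolynomial.X l) - 1}) ⊔ Ideal.span {∑ i, v i • β i} := by
  classical
  generalize hQ : Ideal.map (algebraMap R S) (maximalIdeal R) ⊔
      Ideal.span ((fun i => φ (MvPolynomial.X i)) '' {i | i ≠ l}) ⊔
      Ideal.span {φ (MvPolynomial.X l) - 1} = Q
  have hQm : ∀ r ∈ maximalIdeal R, algebraMap R S r ∈ Q := fun r hr => by
    rw [← hQ]
    exact Ideal.mem_sup_left (Ideal.mem_sup_left (Ideal.mem_map_of_mem _ hr))
  have hQi : ∀ i, i ≠ l → φ (MvPolynomial.X i) ∈ Q := fun i hi => by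
    rw [← hQ]
    exact Ideal.mem_sup_left (Ideal.mem_sup_right (Ideal.subset_span ⟨i, hi, rfl⟩))
  have hQl : φ (MvPolynomial.X l) - 1 ∈ Q := by
    rw [← hQ]
    exact Ideal.mem_sup_right (Ideal.subset_span rfl)
  let q : S →+* S ⧸ Q := Ideal.Quotient.mk Q
  have hq : (q.comp φ.toRingHom).Finite :=
    (RingHom.Finite.of_surjective q Ideal.Quotient.mk_surjective).comp hfin
  let g : ResidueField R →+* S ⧸ Q :=
    Ideal.Quotient.lift (maximalIdeal R) (q.comp (algebraMap R S)) (fun a ha =>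
      Ideal.Quotient.eq_zero_iff_mem.mpr (hQm a ha))
  have hgr : ∀ r, g (residue R r) = q (algebraMap R S r) := fun r => rfl
  have hql : q (φ (MvPolynomial.X l)) = 1 := by
    have := Ideal.Quotient.eq_zero_iff_mem.mpr hQl
    rw [map_sub, map_one, sub_eq_zero] at this
    exact this
  have hg : g.comp ((residue R).comp (MvPolynomial.eval (fun i => if i = l then 1 else 0)))
      = q.comp φ.toRingHom := by
    apply MvPolynomial.ringHom_ext
    · intro r
      have : φ.toRingHom (MvPolynomial.C r) = algebraMap R _ r := φ.commutes r
      simp only [RingHom.comp_apply, MvPolynomial.eval_C, this, hgr]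
    · intro i
      simp only [RingHom.comp_apply, MvPolynomial.eval_X, hgr]
      by_cases hi : i = l
      · subst hi
        simpa using hql.symm
      · have : q (φ (MvPolynomial.X i)) = 0 := Ideal.Quotient.eq_zero_iff_mem.mpr (hQi i hi)
        simpa [hi] using this.symm
  have hgfin : g.Finite := RingHom.Finite.of_comp_finite (hg ▸ hq)
  let : Algebra (ResidueField R) (S ⧸ Q) := g.toAlgebra
  have hmf : Module.Finite (ResidueField R) (S ⧸ Q) := hgfin
  have hart : IsArtinianRing (S ⧸ Q) := IsArtinianRing.of_finite (ResidueField R) (S ⧸ Q)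
  let L : (Fin d → ResidueField R) →ₗ[ResidueField R] (S ⧸ Q) :=
    Fintype.linearCombination (ResidueField R) (fun i => q (β i))
  let p : MaximalSpectrum (S ⧸ Q) → Subspace (ResidueField R) (Fin d → ResidueField R) :=
    fun M => Submodule.comap L (M.asIdeal.restrictScalars (ResidueField R))
  have hp : ∀ M, p M ≠ ⊤ := by
    intro M hM
    have hb : ∀ i, q (β i) ∈ M.asIdeal := by
      intro i
      have : Pi.single i 1 ∈ p M := by rw [hM]; trivial
      have h2 : L (Pi.single i 1) ∈ M.asIdeal := this
      simpa [L, Fintype.linearCombination_apply, Pi.single_apply] using h2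
    have h3 : Ideal.span (Set.range β) ≤ M.asIdeal.comap q := by
      rw [Ideal.span_le]
      rintro _ ⟨i, rfl⟩
      exact hb i
    have h4 : q (φ (MvPolynomial.X l) ^ N) ∈ M.asIdeal := h3 hβ
    rw [map_pow, hql, one_pow] at h4
    exact M.isMaximal.ne_top ((Ideal.eq_top_iff_one _).mpr h4)
  have hex : ∃ w, ∀ M, w ∉ p M := by
    by_contra! hcon
    obtain ⟨M, hM⟩ := Subspace.exists_eq_top_of_iUnion_eq_univ (p := p)
      (Set.eq_univ_of_forall fun w => Set.mem_iUnion.mpr (hcon w))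
    exact hp M hM
  obtain ⟨w, hw⟩ := hex
  choose v hv using fun i => IsLocalRing.residue_surjective (w i)
  refine ⟨v, ?_⟩
  have hLw : L w = q (∑ i, v i • β i) := by
    simp only [L, Fintype.linearCombination_apply, map_sum, Algebra.smul_def, map_mul]
    refine Finset.sum_congr rfl fun i _ => ?_
    rw [← hv i]
    rfl
  have hunit : IsUnit (L w) := by
    by_contra hnu
    obtain ⟨M, hM, hmem⟩ := exists_max_ideal_of_mem_nonunits hnu
    exact hw ⟨M, hM⟩ hmem
  obtain ⟨y, hy⟩ := hunit.exists_right_inv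
  obtain ⟨z, rfl⟩ := Ideal.Quotient.mk_surjective y
  rw [hLw] at hy
  have h1 : 1 - (∑ i, v i • β i) * z ∈ Q := by
    rw [← Ideal.Quotient.eq_zero_iff_mem, map_sub, map_one, map_mul]
    exact sub_eq_zero.mpr hy.symm
  have h2 := add_mem (Ideal.mem_sup_left (T := Ideal.span {∑ i, v i • β i}) h1)
    (Ideal.mem_sup_right (S := Q) (Ideal.mul_mem_right z _
      (Ideal.subset_span (Set.mem_singleton (∑ i, v i • β i)))))
  simpa using h2

/-- Graded pieces of the ideal generated by the maximal ideal and `J t`. -/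
def gradedPiece (𝔪 J I : Ideal R) : ℕ → Ideal R
  | 0 => 𝔪
  | j + 1 => J * I ^ j ⊔ 𝔪 * I ^ (j + 1)

lemma gradedPiece_mul_le (𝔪 J I : Ideal R) (hJ : J ≤ I) (i j : ℕ) :
    gradedPiece 𝔪 J I i * I ^ j ≤ gradedPiece 𝔪 J I (i + j) := by
  cases i with
  | zero =>
    cases j with
    | zero => simp
    | succ j =>
      rw [zero_add]
      change 𝔪 * I ^ (j + 1) ≤ J * I ^ j ⊔ 𝔪 * I ^ (j + 1)
      exact le_sup_right
  | succ i =>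
    rw [show i + 1 + j = (i + j) + 1 by omega]
    change (J * I ^ i ⊔ 𝔪 * I ^ (i + 1)) * I ^ j
      ≤ J * I ^ (i + j) ⊔ 𝔪 * I ^ (i + j + 1)
    rw [Ideal.sup_mul, mul_assoc, mul_assoc, ← pow_add, ← pow_add,
      show i + 1 + j = (i + j) + 1 by omega]

/-- The homogeneous ideal with the given graded pieces. -/
def gradedIdeal (𝔪 J I : Ideal R) (hJ : J ≤ I) : Ideal (reesAlgebra I) where
  carrier := {y | ∀ j, (y : R[X]).coeff j ∈ gradedPiece 𝔪 J I j}
  add_mem' := fun {x y} hx hy j => by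
    simpa using add_mem (hx j) (hy j)
  zero_mem' := fun j => by simp
  smul_mem' := fun s y hy j => by
    change ((s : R[X]) * (y : R[X])).coeff j ∈ _
    rw [coeff_mul]
    refine Ideal.sum_mem _ fun ⟨u, w⟩ huw => ?_
    rw [← Finset.HasAntidiagonal.mem_antidiagonal.mp huw, mul_comm, add_comm]
    exact gradedPiece_mul_le 𝔪 J I hJ _ _ (Ideal.mul_mem_mul (hy _) (s.2 _))

lemma pow_mem_of_one_mem (𝔪 J I : Ideal R) (hJ : J ≤ I) (a : R) (ha : a ∈ I)
    (h : (1 : reesAlgebra I) ∈ gradedIdeal 𝔪 J I hJ ⊔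
      Ideal.span {reesMon I 1 a (by simpa using ha) - 1}) :
    ∃ N, a ^ (N + 1) ∈ J * I ^ N ⊔ 𝔪 * I ^ (N + 1) := by
  obtain ⟨y, hy, z, hz, hyz⟩ := Submodule.mem_sup.mp h
  obtain ⟨g, rfl⟩ := Ideal.mem_span_singleton'.mp hz
  have hpoly : (y : R[X]) = 1 - (g : R[X]) * (monomial 1 a - 1) := by
    have := congrArg (Subtype.val) hyz
    simp only [reesMon, Subalgebra.coe_add, Subalgebra.coe_mul, Subalgebra.coe_sub,
      Subalgebra.coe_one] at this
    exact eq_sub_of_add_eq this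
  have key : ∀ j, (g : R[X]).coeff j + a ^ j ∈ gradedPiece 𝔪 J I j := by
    intro j
    induction j with
    | zero =>
      have := hy 0
      rw [hpoly] at this
      simpa [mul_sub, ← C_mul_X_eq_monomial, add_comm] using this
    | succ j ih =>
      have h1 := hy (j + 1)
      have h2 : (y : R[X]).coeff (j + 1) = (g : R[X]).coeff (j + 1) - (g : R[X]).coeff j * a := by
        rw [hpoly, mul_sub, ← C_mul_X_eq_monomial, ← mul_assoc]
        simp [coeff_one]
      rw [h2] at h1
      have h3 := gradedPiece_mul_le 𝔪 J I hJ j 1 (Ideal.mul_mem_mul ih (by simpa using ha))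
      have h4 := add_mem h1 h3
      convert h4 using 1
      ring
  refine ⟨(g : R[X]).natDegree, ?_⟩
  have := key ((g : R[X]).natDegree + 1)
  rw [coeff_eq_zero_of_natDegree_lt (Nat.lt_succ_self _), zero_add] at this
  exact this

lemma isReduction_of_pow_mem [IsNoetherianRing R] [IsLocalRing R] {I J : Ideal R} (hJ : J ≤ I)
    (a : R) (ha : a ∈ I) (n : ℕ) (hn : I ^ (n + 1) ≤ (Ideal.span {a} ⊔ J) * I ^ n) (N : ℕ)
    (h : a ^ (N + 1) ∈ J * I ^ N ⊔ maximalIdeal R * I ^ (N + 1)) : IsReduction J I := by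
  have key : ∀ M, I ^ (n + M + 1) ≤ Ideal.span {a ^ (M + 1)} * I ^ n ⊔ J * I ^ (n + M) := by
    intro M
    induction M with
    | zero => simpa [Ideal.sup_mul] using hn
    | succ M ih =>
      calc I ^ (n + (M + 1) + 1) = I ^ (n + 1) * I ^ (M + 1) := by rw [← pow_add]; congr 1; omega
        _ ≤ ((Ideal.span {a} ⊔ J) * I ^ n) * I ^ (M + 1) := Ideal.mul_mono_left hn
        _ = Ideal.span {a} * I ^ (n + M + 1) ⊔ J * I ^ (n + (M + 1)) := by
          rw [mul_assoc, ← pow_add, Ideal.sup_mul]; rfl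
        _ ≤ Ideal.span {a} * (Ideal.span {a ^ (M + 1)} * I ^ n ⊔ J * I ^ (n + M))
            ⊔ J * I ^ (n + (M + 1)) := sup_le_sup_right (Ideal.mul_mono_right ih) _
        _ ≤ _ := by
          rw [Ideal.mul_sup, ← mul_assoc, Ideal.span_singleton_mul_span_singleton, ← pow_succ',
            mul_left_comm]
          refine sup_le (sup_le le_sup_left (le_trans (Ideal.mul_mono_right ?_) le_sup_right))
            le_sup_right
          rw [← add_assoc, pow_succ']
          exact Ideal.mul_mono_left ((Ideal.span_singleton_le_iff_mem _).mpr ha)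
  refine isReduction_of_nakayama hJ (n + N) ((key N).trans ?_)
  refine sup_le ?_ le_sup_left
  calc Ideal.span {a ^ (N + 1)} * I ^ n
      ≤ (J * I ^ N ⊔ maximalIdeal R * I ^ (N + 1)) * I ^ n :=
        Ideal.mul_mono_left ((Ideal.span_singleton_le_iff_mem _).mpr h)
    _ = _ := by
      rw [Ideal.sup_mul, mul_assoc, mul_assoc, ← pow_add, ← pow_add]
      congr 3 <;> ring

lemma exists_reduction [IsNoetherianRing R] [IsLocalRing R] [Infinite (ResidueField R)]
    (I : Ideal R) (d : ℕ) (l : Fin d) (a b : Fin d → R)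
    (ha : IsReduction (Ideal.span (Set.range a)) I)
    (hb : IsReduction (Ideal.span (Set.range b)) I) :
    ∃ x ∈ Ideal.span (Set.range b),
      IsReduction (Ideal.span (insert x (a '' {i | i ≠ l}))) I := by
  obtain ⟨hale, n, hn⟩ := ha
  obtain ⟨hble, N, hN⟩ := hb
  have haI : ∀ i, a i ∈ I := fun i => hale (Ideal.subset_span ⟨i, rfl⟩)
  have hbI : ∀ i, b i ∈ I := fun i => hble (Ideal.subset_span ⟨i, rfl⟩)
  let φ := polyToRees I a haI
  have hφ : ∀ i, φ (MvPolynomial.X i) = reesMon I 1 (a i) (by simpa using haI i) := fun i => by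
    simp [φ, polyToRees]
  let β : Fin d → reesAlgebra I := fun i => reesMon I 1 (b i) (by simpa using hbI i)
  have hβ : φ (MvPolynomial.X l) ^ (N + 1) ∈ Ideal.span (Set.range β) := by
    have h1 : a l ^ (N + 1) ∈ Ideal.span (Set.range b) * I ^ N := by
      rw [← hN]; exact Ideal.pow_mem_pow (haI l) _
    obtain ⟨y, hy⟩ : ∃ y : Fin d → R, (∀ i, y i ∈ I ^ N) ∧ ∑ i, y i * b i = a l ^ (N + 1) := by
      rw [mul_comm, ← smul_eq_mul] at h1
      obtain ⟨y, hy, hy2⟩ := (Submodule.mem_ideal_smul_span_iff_exists_sum (I ^ N) b _).mp h1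
      refine ⟨y, hy, ?_⟩
      rw [← hy2, Finsupp.sum_fintype _ _ (by simp)]
      simp
    have h2 : φ (MvPolynomial.X l) ^ (N + 1) = ∑ i, reesMon I N (y i) (hy.1 i) * β i := by
      rw [hφ]
      ext1
      rw [AddSubmonoidClass.coe_finsetSum]
      simp [reesMon, β, monomial_mul_monomial, monomial_pow, ← hy.2]
    rw [h2]
    exact Ideal.sum_mem _ fun i _ => Ideal.mul_mem_left _ _ (Ideal.subset_span ⟨i, rfl⟩)
  obtain ⟨v, hv⟩ := exists_generic_unit φ (polyToRees_finite I a haI n hn) l β (N + 1) hβ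
  have hx : ∑ i, v i * b i ∈ Ideal.span (Set.range b) :=
    Ideal.sum_mem _ fun i _ => Ideal.mul_mem_left _ _ (Ideal.subset_span ⟨i, rfl⟩)
  set x := ∑ i, v i * b i with hxdef
  refine ⟨x, hx, ?_⟩
  set J := Ideal.span (insert x (a '' {i | i ≠ l})) with hJdef
  have hJ : J ≤ I := by
    rw [hJdef, Ideal.span_le]
    rintro _ (rfl | ⟨i, _, rfl⟩)
    · exact hble hx
    · exact haI i
  have hmon : ∀ (r : R) (hr : r ∈ I ^ 1), r ∈ J →
      reesMon I 1 r hr ∈ gradedIdeal (maximalIdeal R) J I hJ := by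
    intro r hr hrJ j
    by_cases hj : j = 1
    · subst hj
      simp only [reesMon, coeff_monomial_same, gradedPiece]
      exact Ideal.mem_sup_left (by simpa using hrJ)
    · simp [reesMon, coeff_monomial, Ne.symm hj]
  have hone : (1 : reesAlgebra I) ∈ gradedIdeal (maximalIdeal R) J I hJ ⊔
      Ideal.span {reesMon I 1 (a l) (by simpa using haI l) - 1} := by
    refine Set.mem_of_subset_of_mem ?_ hv
    rw [SetLike.coe_subset_coe]
    refine sup_le (sup_le (sup_le ?_ ?_) ?_) ?_
    · refine le_trans ?_ le_sup_left
      rw [Ideal.map_le_iff_le_comap]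
      intro r hr j
      change ((algebraMap R R[X]) r).coeff j ∈ _
      rw [Polynomial.algebraMap_apply, coeff_C]
      split_ifs with hj
      · subst hj; exact hr
      · exact zero_mem _
    · refine le_trans ?_ le_sup_left
      rw [Ideal.span_le]
      rintro _ ⟨i, hi, rfl⟩
      change φ _ ∈ _
      rw [hφ]
      exact hmon _ _ (Ideal.subset_span (Or.inr ⟨i, hi, rfl⟩))
    · rw [hφ]
      exact le_sup_right
    · refine le_trans ?_ le_sup_left
      rw [Ideal.span_singleton_le_iff_mem]
      have : ∑ i, v i • β i = reesMon I 1 x (by simpa using hble hx) := by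
        ext1
        rw [AddSubmonoidClass.coe_finsetSum]
        simp [reesMon, β, hxdef, smul_monomial]
      rw [this]
      exact hmon _ _ (Ideal.subset_span (Or.inl rfl))
  obtain ⟨M, hM⟩ := pow_mem_of_one_mem _ J I hJ (a l) (haI l) hone
  refine isReduction_of_pow_mem hJ (a l) (haI l) n ?_ M hM
  rw [hn]
  refine Ideal.mul_mono_left ?_
  rw [Ideal.span_le]
  rintro _ ⟨i, rfl⟩
  by_cases hi : i = l
  · subst hi
    exact Ideal.mem_sup_left (Ideal.subset_span rfl)
  · exact Ideal.mem_sup_right (Ideal.subset_span (Or.inr ⟨i, hi, rfl⟩))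

end helpers

/-- Existence form of generic exchange for minimal reductions: some `b ∈ 𝔟`
makes `(a₁,…,a_{d-1},b)` a minimal reduction of `I`. -/
theorem exists_exchange_minimal_reductions (R : Type*) [CommRing R]
    [IsNoetherianRing R] [IsLocalRing R] [Infinite (IsLocalRing.ResidueField R)]
    (I : Ideal R) (hI : I ≠ ⊤) (d : ℕ) (hd : 0 < d)
    (hspread : analyticSpread R I = d)
    (a b : Fin d → R)
    (ha : IsMinimalReduction (Ideal.span (Set.range a)) I)
    (hb : IsMinimalReduction (Ideal.span (Set.range b)) I) :
    ∃ x ∈ Ideal.span (Set.range b),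
      IsMinimalReduction
        (Ideal.span (insert x (a '' {i : Fin d | (i : ℕ) + 1 < d}))) I := by
  let l : Fin d := ⟨d - 1, by omega⟩
  have hset : {i : Fin d | (i : ℕ) + 1 < d} = {i | i ≠ l} := by
    ext i
    have := i.2
    simp only [Set.mem_ofPred_eq, ne_eq, Fin.ext_iff, l]
    omega
  obtain ⟨x, hx, hred⟩ := exists_reduction I d l a b ha.1 hb.1
  refine ⟨x, hx, ?_⟩
  rw [hset]
  have hrange : insert x (a '' {i | i ≠ l}) = Set.range (Function.update a l x) := by
    ext y
    constructor
    · rintro (rfl | ⟨i, hi, rfl⟩)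
      · exact ⟨l, by simp⟩
      · exact ⟨i, Function.update_of_ne hi _ _⟩
    · rintro ⟨i, rfl⟩
      by_cases hi : i = l
      · subst hi; left; simp
      · right; exact ⟨i, hi, (Function.update_of_ne hi _ _).symm⟩
  rw [hrange] at hred ⊢
  exact isMinimal_of_isReduction hspread _ hred
end

section
/- Let S be a standard ℕⁿ-graded k-algebra over an infinite field k with diagonal subring S^Δ of dimension d ≥ 1, and let {x_{ij}} and {w_{ij}} (1 ≤ i ≤ n, 1 ≤ j ≤ d) be complete reductions of S. Then there is a proper Zariski-closed subset M ⊊ k^d such that for v = (v₁,...,v_d) ∈ k^d, the matrix obtained from {x_{ij}} by replacing its last column with the column (Σ_h v_h w_{ih})ᵢ is a complete reduction of S if and only if v ∉ M. -/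
/-- A complete reduction of type `r` of a standard `ℕⁿ`-graded `k`-algebra `S`
(with grading `𝒜`): an `n × r` matrix `{x_{ij}}` with `x_{ij} ∈ S^{(i)}`
(the degree-`eᵢ` component) such that, with `X_j = ∏ᵢ x_{ij}`, the diagonal
subring `S^Δ = k[S_{(1,…,1)}]` is a finite module over `k[X₁, …, X_r]`. -/
def IsCompleteReduction (k : Type*) {S : Type*} [Field k] [CommRing S]
    [Algebra k S] {n : ℕ} (𝒜 : (Fin n → ℕ) → Submodule k S) {r : ℕ}
    (x : Fin n → Fin r → S) : Prop :=
  (∀ i j, x i j ∈ 𝒜 (Pi.single i 1)) ∧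
  ∃ h : Algebra.adjoin k (Set.range fun j => ∏ i, x i j) ≤
      Algebra.adjoin k (𝒜 (fun _ => 1) : Set S),
    (Subalgebra.inclusion h).toRingHom.Finite

namespace GenExch

section alg
variable {k S : Type*} [Field k] [CommRing S] [Algebra k S]

lemma mul_le_mul_left_ {M N P : Submodule k S} (h : M ≤ N) : M * P ≤ N * P :=
  mul_le_mul' h le_rfl

lemma mul_le_mul_right_ {M N P : Submodule k S} (h : M ≤ N) : P * M ≤ P * N :=
  mul_le_mul' le_rfl h

lemma adjoin_le_iSup (U : Submodule k S) :
    Subalgebra.toSubmodule (Algebra.adjoin k (U : Set S)) ≤ ⨆ l : ℕ, U ^ l := by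
  intro x hx
  rw [Subalgebra.mem_toSubmodule] at hx
  induction hx using Algebra.adjoin_induction with
  | mem x hx => exact (le_iSup (fun l : ℕ => U ^ l) 1) (by simpa using hx)
  | algebraMap r =>
    exact (le_iSup (fun l : ℕ => U ^ l) 0)
      (by rw [pow_zero]; exact Submodule.algebraMap_mem r)
  | add x y _ _ hx hy => exact add_mem hx hy
  | mul x y _ _ hx hy =>
    have h := Submodule.mul_mem_mul hx hy
    rw [Submodule.iSup_mul] at h
    refine (iSup_le fun i => ?_ : _ ≤ ⨆ l : ℕ, U ^ l) h
    rw [Submodule.mul_iSup]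
    refine iSup_le fun j => ?_
    rw [← pow_add]
    exact le_iSup (fun l : ℕ => U ^ l) (i + j)

lemma pow_le_adjoin (U : Submodule k S) (l : ℕ) :
    U ^ l ≤ Subalgebra.toSubmodule (Algebra.adjoin k (U : Set S)) := by
  induction l with
  | zero =>
    rw [pow_zero, Submodule.one_le, Subalgebra.mem_toSubmodule]
    exact one_mem _
  | succ l ih =>
    rw [pow_succ, Submodule.mul_le]
    intro a ha b hb
    exact mul_mem (S := Subalgebra k S) (ih ha) (Algebra.subset_adjoin hb)

lemma finite_incl_iff (A R : Subalgebra k S) (h : A ≤ R) :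
    (Subalgebra.inclusion h).toRingHom.Finite ↔
      ∃ T : Submodule k S, T.FG ∧ T ≤ Subalgebra.toSubmodule R ∧
        Subalgebra.toSubmodule R ≤ Subalgebra.toSubmodule A * T := by
  let _ : Algebra A R := (Subalgebra.inclusion h).toRingHom.toAlgebra
  have hsm : ∀ (a : A) (r : R), ((a • r : R) : S) = a * r := fun a r => rfl
  constructor
  · intro hf
    have hf' : Module.Finite A R := hf
    obtain ⟨s, hs⟩ := hf'.fg_top
    refine ⟨Submodule.span k ((fun r : R => (r : S)) '' (s : Set R)), ?_, ?_, ?_⟩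
    · exact Submodule.fg_span (s.finite_toSet.image _)
    · rw [Submodule.span_le]
      rintro _ ⟨r, _, rfl⟩
      exact r.2
    · intro r hr
      have hm : (⟨r, hr⟩ : R) ∈ Submodule.span A (s : Set R) := by rw [hs]; trivial
      have key : ∀ q : R, q ∈ Submodule.span A (s : Set R) → (q : S) ∈
          Subalgebra.toSubmodule A *
            Submodule.span k ((fun r : R => (r : S)) '' (s : Set R)) := by
        intro q hq
        induction hq using Submodule.span_induction with
        | mem x hx =>
          have := Submodule.mul_mem_mul (M := Subalgebra.toSubmodule A) (one_mem A)
            (Submodule.subset_span (R := k) (Set.mem_image_of_mem (fun r : R => (r : S)) hx))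
          simpa using this
        | zero => exact zero_mem _
        | add x y _ _ hx hy => exact add_mem hx hy
        | smul a x _ hx =>
          rw [hsm]
          have h2 := Submodule.mul_mem_mul (M := Subalgebra.toSubmodule A) a.2 hx
          rw [← mul_assoc, (Subalgebra.isIdempotentElem_toSubmodule A).eq] at h2
          exact h2
      exact key _ hm
  · rintro ⟨T, ⟨s, rfl⟩, hTR, hR⟩
    have hsR : ∀ x ∈ s, x ∈ R := fun x hx => hTR (Submodule.subset_span hx)
    show Module.Finite A R
    refine ⟨?_⟩
    have : (⊤ : Submodule A R) = Submodule.span A ((fun r : R => (r : S)) ⁻¹' (s : Set S)) := by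
      symm
      rw [eq_top_iff]
      rintro ⟨r, hr⟩ -
      have hr' := hR hr
      have key : ∀ q : S, q ∈ Subalgebra.toSubmodule A * Submodule.span k (s : Set S) →
          ∃ p ∈ Submodule.span A ((fun r : R => (r : S)) ⁻¹' (s : Set S)), (p : S) = q := by
        intro q hq
        induction hq using Submodule.mul_induction_on' with
        | mem_mul_mem a ha t ht =>
          have : ∃ p ∈ Submodule.span A ((fun r : R => (r : S)) ⁻¹' (s : Set S)), (p : S) = t := by
            induction ht using Submodule.span_induction with
            | mem x hx => exact ⟨⟨x, hsR x hx⟩, Submodule.subset_span hx, rfl⟩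
            | zero => exact ⟨0, zero_mem _, rfl⟩
            | add x y _ _ hx hy =>
              obtain ⟨p, hp, rfl⟩ := hx
              obtain ⟨p', hp', rfl⟩ := hy
              exact ⟨p + p', add_mem hp hp', rfl⟩
            | smul c x _ hx =>
              obtain ⟨p, hp, rfl⟩ := hx
              refine ⟨algebraMap k A c • p, Submodule.smul_mem _ _ hp, ?_⟩
              rw [hsm, Algebra.smul_def]; rfl
          obtain ⟨p, hp, rfl⟩ := this
          exact ⟨(⟨a, ha⟩ : A) • p, Submodule.smul_mem _ _ hp, rfl⟩
        | add x _ y _ hx hy =>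
          obtain ⟨p, hp, rfl⟩ := hx
          obtain ⟨p', hp', rfl⟩ := hy
          exact ⟨p + p', add_mem hp hp', rfl⟩
      obtain ⟨p, hp, hpr⟩ := key r hr'
      have : p = ⟨r, hr⟩ := Subtype.ext hpr
      exact this ▸ hp
    rw [this]
    exact Submodule.fg_span (s.finite_toSet.preimage (Subtype.val_injective.injOn))

lemma fg_pow (V : Submodule k S) (hV : V.FG) (m : ℕ) : (V ^ m).FG := hV.pow m

/-- Backwards direction of the characterization of finiteness. -/
lemma finite_of_pow (U V : Submodule k S) (hV : V.FG)
    (h : Algebra.adjoin k (U : Set S) ≤ Algebra.adjoin k (V : Set S))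
    (m : ℕ) (hm : V ^ (m + 1) ≤ U * V ^ m) : (Subalgebra.inclusion h).toRingHom.Finite := by
  rw [finite_incl_iff]
  refine ⟨⨆ j : Fin (m + 1), V ^ (j : ℕ), ?_, ?_, ?_⟩
  · exact Submodule.fg_iSup _ fun j => hV.pow _
  · exact iSup_le fun j => pow_le_adjoin V j
  · refine (adjoin_le_iSup V).trans (iSup_le fun l => ?_)
    set A := Subalgebra.toSubmodule (Algebra.adjoin k (U : Set S)) with hA
    have h1 : (1 : Submodule k S) ≤ A := by simpa only [pow_zero] using pow_le_adjoin U 0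
    by_cases hl : l ≤ m
    · calc V ^ l = 1 * V ^ l := (one_mul _).symm
        _ ≤ A * V ^ l := mul_le_mul_left_ h1
        _ ≤ _ := mul_le_mul_right_
          (le_iSup (fun j : Fin (m + 1) => V ^ (j : ℕ)) ⟨l, by omega⟩)
    · have key : ∀ q, V ^ (m + q) ≤ U ^ q * V ^ m := by
        intro q
        induction q with
        | zero => simp
        | succ q ih =>
          calc V ^ (m + (q + 1)) = V ^ (m + q) * V := by rw [← add_assoc, pow_succ]
            _ ≤ U ^ q * V ^ m * V := mul_le_mul_left_ ih
            _ = U ^ q * V ^ (m + 1) := by rw [mul_assoc, pow_succ]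
            _ ≤ U ^ q * (U * V ^ m) := mul_le_mul_right_ hm
            _ = _ := by rw [← mul_assoc, pow_succ]
      obtain ⟨q, rfl⟩ : ∃ q, l = m + q := ⟨l - m, by omega⟩
      refine (key q).trans (mul_le_mul' (pow_le_adjoin U q) ?_)
      exact le_iSup (fun j : Fin (m + 1) => V ^ (j : ℕ)) ⟨m, by omega⟩

end alg

section graded
variable {k S : Type*} [Field k] [CommRing S] [Algebra k S] {n : ℕ}
    (𝒜 : (Fin n → ℕ) → Submodule k S) [GradedAlgebra 𝒜]

open DirectSum

lemma pow_le_diag (m : ℕ) : (𝒜 (fun _ => 1)) ^ m ≤ 𝒜 (fun _ => m) := by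
  induction m with
  | zero =>
    rw [pow_zero, Submodule.one_le]
    exact SetLike.GradedOne.one_mem (A := 𝒜)
  | succ m ih =>
    rw [pow_succ, Submodule.mul_le]
    intro a ha b hb
    exact SetLike.GradedMul.mul_mem (ih ha) hb

lemma proj_mem_prod (hstd : Algebra.adjoin k (⋃ i, (𝒜 (Pi.single i 1) : Set S)) = ⊤)
    (α : Fin n → ℕ) (s : S) :
    (decompose 𝒜 s α : S) ∈ ∏ i, (𝒜 (Pi.single i 1)) ^ (α i) := by
  set P : (Fin n → ℕ) → Submodule k S := fun α => ∏ i, (𝒜 (Pi.single i 1)) ^ (α i) with hP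
  have hPmul : ∀ α β, P α * P β = P (α + β) := by
    intro α β
    simp only [hP, ← Finset.prod_mul_distrib, ← pow_add, Pi.add_apply]
  have hPs : ∀ i, P (Pi.single i 1) = 𝒜 (Pi.single i 1) := by
    intro i
    simp only [hP]
    rw [Finset.prod_eq_single i]
    · simp
    · intro j _ hj
      simp [Pi.single_eq_of_ne hj]
    · simp
  have hPle : ∀ α, P α ≤ 𝒜 α := by
    intro α
    have hpow : ∀ i (m : ℕ), (𝒜 (Pi.single i 1)) ^ m ≤ 𝒜 (Pi.single i m) := by
      intro i m
      induction m with
      | zero =>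
        rw [pow_zero, Submodule.one_le, Pi.single_zero]
        exact SetLike.GradedOne.one_mem
      | succ m ih =>
        rw [pow_succ, Submodule.mul_le]
        intro a ha b hb
        rw [Pi.single_add]
        exact SetLike.GradedMul.mul_mem (ih ha) hb
    have : ∀ t : Finset (Fin n), ∏ i ∈ t, (𝒜 (Pi.single i 1)) ^ (α i) ≤
        𝒜 (∑ i ∈ t, Pi.single i (α i)) := by
      intro t
      induction t using Finset.induction_on with
      | empty =>
        rw [Finset.prod_empty, Submodule.one_le, Finset.sum_empty]
        exact SetLike.GradedOne.one_mem
      | insert i t hi ih =>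
        rw [Finset.prod_insert hi, Finset.sum_insert hi, Submodule.mul_le]
        intro a ha b hb
        exact SetLike.GradedMul.mul_mem (hpow _ _ ha) (ih hb)
    have h2 := this Finset.univ
    rwa [Finset.univ_sum_single] at h2
  have hs : s ∈ ⨆ α, P α := by
    have hs' : s ∈ Algebra.adjoin k (⋃ i, (𝒜 (Pi.single i 1) : Set S)) := by
      rw [hstd]; trivial
    induction hs' using Algebra.adjoin_induction with
    | mem x hx =>
      obtain ⟨i, hi⟩ := Set.mem_iUnion.mp hx
      exact le_iSup P (Pi.single i 1) (by rw [hPs]; exact hi)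
    | algebraMap r =>
      exact le_iSup P 0 (by
        simp only [hP, Pi.zero_apply, pow_zero, Finset.prod_const_one]
        exact Submodule.algebraMap_mem r)
    | add x y _ _ hx hy => exact add_mem hx hy
    | mul x y _ _ hx hy =>
      have h := Submodule.mul_mem_mul hx hy
      rw [Submodule.iSup_mul] at h
      refine (iSup_le fun i => ?_ : _ ≤ ⨆ l, P l) h
      rw [Submodule.mul_iSup]
      refine iSup_le fun j => ?_
      rw [hPmul]
      exact le_iSup P (i + j)
  induction hs using Submodule.iSup_induction' with
  | mem β x hx =>
    by_cases hβ : β = α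
    · subst hβ
      rw [decompose_of_mem_same 𝒜 (hPle _ hx)]
      exact hx
    · rw [decompose_of_mem_ne 𝒜 (hPle _ hx) hβ]
      exact zero_mem _
  | zero => simp
  | add x y _ _ hx hy =>
    rw [decompose_add, DirectSum.add_apply, Submodule.coe_add]
    exact add_mem hx hy

lemma diag_eq_pow (hstd : Algebra.adjoin k (⋃ i, (𝒜 (Pi.single i 1) : Set S)) = ⊤) (m : ℕ) :
    𝒜 (fun _ => m) = (𝒜 (fun _ => 1)) ^ m := by
  refine le_antisymm ?_ (pow_le_diag 𝒜 m)
  intro s hs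
  have h := proj_mem_prod 𝒜 hstd (fun _ => m) s
  rw [decompose_of_mem_same 𝒜 hs, Finset.prod_pow] at h
  have h2 : ∀ t : Finset (Fin n), ∏ i ∈ t, 𝒜 (Pi.single i 1) ≤
        𝒜 (∑ i ∈ t, Pi.single i 1) := by
    intro t
    induction t using Finset.induction_on with
    | empty =>
      rw [Finset.prod_empty, Submodule.one_le, Finset.sum_empty]
      exact SetLike.GradedOne.one_mem
    | insert i t hi ih =>
      rw [Finset.prod_insert hi, Finset.sum_insert hi, Submodule.mul_le]
      intro a ha b hb
      exact SetLike.GradedMul.mul_mem ha (ih hb)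
  have h3 := h2 Finset.univ
  rw [Finset.univ_sum_single (fun _ : Fin n => 1)] at h3
  have h4 := pow_le_pow_left' h3 m
  exact h4 h

/-- Projection of `u * s`, with `u` of diagonal degree `l`. -/
lemma proj_mul_diag {l m : ℕ} {u : S} (hu : u ∈ 𝒜 (fun _ => l)) (hlm : l ≤ m) (s : S) :
    (decompose 𝒜 (u * s) (fun _ => m) : S) = u * decompose 𝒜 s (fun _ => m - l) := by
  have h := coe_decompose_mul_add_of_left_mem 𝒜 (j := fun _ => m - l) (b := s) hu
  have e : ((fun _ => l) + (fun _ => m - l) : Fin n → ℕ) = fun _ => m := by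
    funext i; simp; omega
  rwa [e] at h

lemma proj_mul_diag_zero (hn : 0 < n) {l m : ℕ} {u : S} (hu : u ∈ 𝒜 (fun _ => l))
    (hlm : ¬ l ≤ m) (s : S) :
    (decompose 𝒜 (u * s) (fun _ => m) : S) = 0 := by
  apply coe_decompose_mul_of_left_mem_of_not_le 𝒜 hu
  intro h
  exact hlm (h ⟨0, hn⟩)

/-- Forward direction. -/
lemma pow_of_finite (hn : 0 < n) (h0 : 𝒜 0 = 1) (U : Submodule k S) (hUV : U ≤ 𝒜 (fun _ => 1))
    (hUfg : U.FG)
    (h : Algebra.adjoin k (U : Set S) ≤ Algebra.adjoin k (𝒜 (fun _ => 1) : Set S))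
    (hf : (Subalgebra.inclusion h).toRingHom.Finite) :
    (𝒜 (fun _ => 1)).FG ∧
      ∃ m : ℕ, (𝒜 (fun _ => 1)) ^ (m + 1) ≤ U * (𝒜 (fun _ => 1)) ^ m := by
  rw [finite_incl_iff] at hf
  obtain ⟨T, hTfg, hTR, hR⟩ := hf
  set V := 𝒜 (fun _ => 1) with hV
  have hUl : ∀ l : ℕ, U ^ l ≤ 𝒜 (fun _ => l) := fun l =>
    (pow_le_pow_left' hUV l).trans (pow_le_diag 𝒜 l)
  have hR' : Subalgebra.toSubmodule (Algebra.adjoin k (V : Set S)) ≤ ⨆ l : ℕ, U ^ l * T := by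
    refine hR.trans ((mul_le_mul_left_ (adjoin_le_iSup U)).trans ?_)
    rw [Submodule.iSup_mul]
  constructor
  · have hle : V ≤ T.map (GradedAlgebra.proj 𝒜 (fun _ => 1)) ⊔ U := by
      intro v hv
      have hv' := hR' (Algebra.subset_adjoin hv)
      have hvp : GradedAlgebra.proj 𝒜 (fun _ => 1) v = v := decompose_of_mem_same 𝒜 hv
      rw [← hvp]
      clear hvp hv
      rw [← Submodule.mem_comap]
      refine (iSup_le fun l => ?_ : (⨆ l : ℕ, U ^ l * T) ≤ _) hv'
      rw [Submodule.mul_le]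
      intro u hu t ht
      rw [Submodule.mem_comap, GradedAlgebra.proj_apply]
      by_cases hl : l ≤ 1
      · rw [proj_mul_diag 𝒜 (hUl l hu) hl]
        interval_cases l
        · rw [pow_zero, Submodule.mem_one] at hu
          obtain ⟨c, rfl⟩ := hu
          rw [← Algebra.smul_def]
          exact Submodule.smul_mem _ _ (Submodule.mem_sup_left (Submodule.mem_map_of_mem ht))
        · rw [pow_one] at hu
          have hz : (decompose 𝒜 t (fun _ => 1 - 1) : S) ∈ 𝒜 0 := (decompose 𝒜 t _).2
          rw [h0, Submodule.mem_one] at hz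
          obtain ⟨c, hc⟩ := hz
          rw [← hc, mul_comm, ← Algebra.smul_def]
          exact Submodule.mem_sup_right (Submodule.smul_mem _ _ hu)
      · rw [proj_mul_diag_zero 𝒜 hn (hUl l hu) hl]
        exact zero_mem _
    have : IsNoetherian k ↥(T.map (GradedAlgebra.proj 𝒜 (fun _ => 1)) ⊔ U) := by
      have := Module.Finite.iff_fg.mpr ((hTfg.map (GradedAlgebra.proj 𝒜 (fun _ => 1))).sup hUfg)
      infer_instance
    exact Submodule.FG.of_le ((hTfg.map (GradedAlgebra.proj 𝒜 (fun _ => 1))).sup hUfg) hle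
  · obtain ⟨m, hm⟩ : ∃ m : ℕ, T ≤ ⨆ j : Fin (m + 1), V ^ (j : ℕ) := by
      have hT' : T ≤ ⨆ l : ℕ, V ^ l := hTR.trans (adjoin_le_iSup V)
      have hmono : Monotone (fun m : ℕ => ⨆ j : Fin (m + 1), V ^ (j : ℕ)) := by
        intro a b hab
        refine iSup_le fun j => ?_
        exact le_iSup (fun j : Fin (b + 1) => V ^ (j : ℕ)) ⟨j, by omega⟩
      have hT2 : T ≤ ⨆ m : ℕ, ⨆ j : Fin (m + 1), V ^ (j : ℕ) := by
        refine hT'.trans (iSup_le fun l => ?_)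
        refine le_trans ?_ (le_iSup _ l)
        exact le_iSup (fun j : Fin (l + 1) => V ^ (j : ℕ)) ⟨l, by omega⟩
      obtain ⟨s, rfl⟩ := hTfg
      have : ∀ x : s, ∃ m : ℕ, (x : S) ∈ ⨆ j : Fin (m + 1), V ^ (j : ℕ) := by
        intro x
        have := hT2 (Submodule.subset_span x.2)
        rwa [Submodule.mem_iSup_of_directed _ hmono.directed_le] at this
      choose g hg using this
      refine ⟨Finset.univ.sup g, ?_⟩
      rw [Submodule.span_le]
      intro x hx
      exact hmono (Finset.le_sup (Finset.mem_univ (⟨x, hx⟩ : s))) (hg ⟨x, hx⟩)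
    refine ⟨m, ?_⟩
    intro v hv
    have hv' := hR' (pow_le_adjoin V _ hv)
    have hvp : GradedAlgebra.proj 𝒜 (fun _ => m + 1) v = v :=
      decompose_of_mem_same 𝒜 (pow_le_diag 𝒜 _ hv)
    rw [← hvp]
    clear hvp hv
    rw [← Submodule.mem_comap]
    have hle : (⨆ l : ℕ, U ^ l * T) ≤ ⨆ l : ℕ, ⨆ j : Fin (m + 1), U ^ l * V ^ (j : ℕ) := by
      refine iSup_mono fun l => ?_
      rw [← Submodule.mul_iSup]
      exact mul_le_mul_right_ hm
    refine (iSup_le fun l => iSup_le fun j => ?_ :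
      (⨆ l : ℕ, ⨆ j : Fin (m + 1), U ^ l * V ^ (j : ℕ)) ≤ _) (hle hv')
    rw [Submodule.mul_le]
    intro u hu t ht
    rw [Submodule.mem_comap, GradedAlgebra.proj_apply]
    have hmem : u * t ∈ 𝒜 (fun _ => l + j) :=
      SetLike.GradedMul.mul_mem (hUl l hu) (pow_le_diag 𝒜 _ ht)
    by_cases hl : l + j = m + 1
    · rw [← hl, decompose_of_mem_same 𝒜 hmem]
      obtain ⟨q, rfl⟩ : ∃ q, l = q + 1 := ⟨l - 1, by omega⟩
      have h1 := Submodule.mul_mem_mul hu ht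
      have h2 : U ^ (q + 1) * V ^ (j : ℕ) ≤ U * V ^ m := by
        rw [pow_succ', mul_assoc]
        refine mul_le_mul_right_ ?_
        refine (mul_le_mul_left_ (pow_le_pow_left' hUV q)).trans ?_
        rw [← pow_add, show q + j = m by omega]
      exact h2 h1
    · rw [decompose_of_mem_ne 𝒜 hmem]
      · exact zero_mem _
      · intro h
        exact hl (congrFun h ⟨0, hn⟩)

lemma prod_mem_diag (y : Fin n → S) (hy : ∀ i, y i ∈ 𝒜 (Pi.single i 1)) :
    ∏ i, y i ∈ 𝒜 (fun _ => 1) := by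
  have h2 : ∀ t : Finset (Fin n), ∏ i ∈ t, y i ∈ 𝒜 (∑ i ∈ t, Pi.single i 1) := by
    intro t
    induction t using Finset.induction_on with
    | empty =>
      rw [Finset.prod_empty, Finset.sum_empty]
      exact SetLike.GradedOne.one_mem
    | insert i t hi ih =>
      rw [Finset.prod_insert hi, Finset.sum_insert hi]
      exact SetLike.GradedMul.mul_mem (hy i) ih
  have h3 := h2 Finset.univ
  rwa [Finset.univ_sum_single (fun _ : Fin n => 1)] at h3

lemma mem_of_mem_ideal (hstd : Algebra.adjoin k (⋃ i, (𝒜 (Pi.single i 1) : Set S)) = ⊤)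
    (G : Set S) (hG : G ⊆ 𝒜 (fun _ => 1)) (m : ℕ) (s : S)
    (hs : s ∈ (𝒜 (fun _ => 1)) ^ (m + 1)) (hsJ : s ∈ Ideal.span G) :
    s ∈ Submodule.span k G * (𝒜 (fun _ => 1)) ^ m := by
  have h1 : s ∈ Submodule.span k G * ⊤ := by
    clear hs
    induction hsJ using Submodule.span_induction with
    | mem x hx =>
      simpa using Submodule.mul_mem_mul (Submodule.subset_span (R := k) hx)
        (Submodule.mem_top (R := k) (x := (1 : S)))
    | zero => exact zero_mem _
    | add x y _ _ hx hy => exact add_mem hx hy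
    | smul a x _ hx =>
      have h := Submodule.mul_mem_mul hx (Submodule.mem_top (R := k) (x := a))
      rw [mul_assoc] at h
      rw [smul_eq_mul, mul_comm a x]
      have h5 : Submodule.span k G * (⊤ * ⊤) ≤ Submodule.span k G * (⊤ : Submodule k S) :=
        mul_le_mul_right_ le_top
      exact h5 h
  have hU : Submodule.span k G ≤ 𝒜 (fun _ => 1) := Submodule.span_le.mpr hG
  have hp : GradedAlgebra.proj 𝒜 (fun _ => m + 1) s = s :=
    decompose_of_mem_same 𝒜 (pow_le_diag 𝒜 _ hs)
  rw [← hp, ← Submodule.mem_comap]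
  refine (?_ : Submodule.span k G * ⊤ ≤ _) h1
  rw [Submodule.mul_le]
  intro u hu a _
  rw [Submodule.mem_comap, GradedAlgebra.proj_apply, proj_mul_diag 𝒜 (hU hu) (by omega)]
  refine Submodule.mul_mem_mul hu ?_
  rw [← diag_eq_pow 𝒜 hstd m]
  exact (decompose 𝒜 a _).2

lemma isCR_iff (hn : 0 < n) (h0 : 𝒜 0 = 1) (hV : (𝒜 (fun _ => 1)).FG) {r : ℕ}
    (z : Fin n → Fin r → S) (hz : ∀ i j, z i j ∈ 𝒜 (Pi.single i 1)) :
    IsCompleteReduction k 𝒜 z ↔ ∃ m : ℕ, (𝒜 (fun _ => 1)) ^ (m + 1) ≤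
      Submodule.span k (Set.range fun j => ∏ i, z i j) * (𝒜 (fun _ => 1)) ^ m := by
  have hU : Submodule.span k (Set.range fun j => ∏ i, z i j) ≤ 𝒜 (fun _ => 1) := by
    rw [Submodule.span_le]
    rintro _ ⟨j, rfl⟩
    exact prod_mem_diag 𝒜 _ fun i => hz i j
  unfold IsCompleteReduction
  rw [← Algebra.adjoin_span (R := k) (s := Set.range fun j => ∏ i, z i j)]
  constructor
  · rintro ⟨_, h, hf⟩
    exact (pow_of_finite 𝒜 hn h0 _ hU (Submodule.fg_span (Set.finite_range _)) h hf).2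
  · rintro ⟨m, hm⟩
    exact ⟨hz, Algebra.adjoin_mono hU, finite_of_pow _ _ hV _ m hm⟩

lemma fg_of_isCR (hn : 0 < n) (h0 : 𝒜 0 = 1) {r : ℕ}
    (z : Fin n → Fin r → S) (hz : IsCompleteReduction k 𝒜 z) : (𝒜 (fun _ => 1)).FG := by
  have hU : Submodule.span k (Set.range fun j => ∏ i, z i j) ≤ 𝒜 (fun _ => 1) := by
    rw [Submodule.span_le]
    rintro _ ⟨j, rfl⟩
    exact prod_mem_diag 𝒜 _ fun i => hz.1 i j
  unfold IsCompleteReduction at hz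
  rw [← Algebra.adjoin_span (R := k) (s := Set.range fun j => ∏ i, z i j)] at hz
  obtain ⟨_, h, hf⟩ := hz
  exact (pow_of_finite 𝒜 hn h0 _ hU (Submodule.fg_span (Set.finite_range _)) h hf).1

end graded

section core

open scoped Pointwise

lemma exists_poly {k C : Type*} [Field k] [Infinite k] [CommRing C] [Algebra k C]
    [Module.Finite k C] {n d : ℕ} (c : (Fin n → Fin d) → C)
    (htop : Ideal.span (Set.range fun h => c (fun _ => h)) = ⊤) :
    ∃ f : MvPolynomial (Fin d) k, (∃ v, MvPolynomial.eval v f ≠ 0) ∧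
      ∀ v : Fin d → k, MvPolynomial.eval v f ≠ 0 ↔
        IsUnit (∑ σ : Fin n → Fin d, (∏ i, v (σ i)) • c σ) := by
  classical
  let b := Module.finBasis k C
  let Mx : Matrix _ _ (MvPolynomial (Fin d) k) :=
    ∑ σ : Fin n → Fin d, (∏ i, (MvPolynomial.X (σ i) : MvPolynomial (Fin d) k)) •
      (Algebra.leftMulMatrix b (c σ)).map MvPolynomial.C
  have hev : ∀ v : Fin d → k, MvPolynomial.eval v Mx.det =
      Algebra.norm k (∑ σ : Fin n → Fin d, (∏ i, v (σ i)) • c σ) := by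
    intro v
    rw [Algebra.norm_eq_matrix_det b, RingHom.map_det]
    congr 1
    ext i j
    simp [Mx, Matrix.sum_apply, map_sum, map_prod]
  have hunit : ∀ y : C, Algebra.norm k y ≠ 0 ↔ IsUnit y := by
    intro y
    constructor
    · intro h
      rw [Algebra.norm_apply, ← isUnit_iff_ne_zero, ← LinearMap.isUnit_iff_isUnit_det] at h
      rw [Module.End.isUnit_iff] at h
      obtain ⟨z, hz⟩ := h.2 1
      exact IsUnit.of_mul_eq_one z hz
    · intro h
      exact (h.map (Algebra.norm k)).ne_zero
  have hiff : ∀ v : Fin d → k, MvPolynomial.eval v Mx.det ≠ 0 ↔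
        IsUnit (∑ σ : Fin n → Fin d, (∏ i, v (σ i)) • c σ) := by
    intro v
    rw [hev, hunit]
  refine ⟨Mx.det, ?_, hiff⟩
  simp only [hiff]
  have : IsArtinianRing C := IsArtinianRing.of_finite k C
  have hg : ∀ 𝔪 : MaximalSpectrum C, ∃ g : MvPolynomial (Fin d) k, g ≠ 0 ∧
      ∀ v, MvPolynomial.eval v g ≠ 0 →
        ∑ σ : Fin n → Fin d, (∏ i, v (σ i)) • c σ ∉ 𝔪.asIdeal := by
    intro 𝔪
    obtain ⟨h, hh⟩ : ∃ h, c (fun _ => h) ∉ 𝔪.asIdeal := by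
      by_contra! hcon
      apply 𝔪.isMaximal.ne_top
      rw [eq_top_iff, ← htop, Ideal.span_le]
      rintro _ ⟨h, rfl⟩
      exact hcon h
    obtain ⟨φ, hφ, hφ0⟩ := Submodule.exists_dual_map_eq_bot_of_notMem
      (p := 𝔪.asIdeal.restrictScalars k) (x := c (fun _ => h)) hh inferInstance
    have hφm : ∀ y ∈ 𝔪.asIdeal, φ y = 0 := by
      intro y hy
      have : φ y ∈ (𝔪.asIdeal.restrictScalars k).map φ := Submodule.mem_map_of_mem hy
      rwa [hφ0, Submodule.mem_bot] at this
    have hge : ∀ v, MvPolynomial.eval v (∑ σ : Fin n → Fin d,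
        MvPolynomial.C (φ (c σ)) * ∏ i, (MvPolynomial.X (σ i) : MvPolynomial (Fin d) k)) =
        φ (∑ σ : Fin n → Fin d, (∏ i, v (σ i)) • c σ) := by
      intro v
      simp [map_sum, map_prod, mul_comm]
    refine ⟨∑ σ : Fin n → Fin d, MvPolynomial.C (φ (c σ)) *
      ∏ i, (MvPolynomial.X (σ i) : MvPolynomial (Fin d) k), ?_, fun v hv => ?_⟩
    rotate_left
    · rw [hge] at hv
      exact fun hmem => hv (hφm _ hmem)
    · intro hz
      have h1 := hge (Pi.single h 1)
      rw [hz, map_zero, Finset.sum_eq_single (fun _ => h)] at h1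
      · simp only [Pi.single_eq_same, Finset.prod_const_one, one_smul] at h1
        exact hφ h1.symm
      · intro σ _ hσ
        obtain ⟨i, hi⟩ := Function.ne_iff.mp hσ
        rw [Finset.prod_eq_zero (Finset.mem_univ i), zero_smul]
        exact Pi.single_eq_of_ne hi _
      · simp
  choose g hg0 hg using hg
  have := Fintype.ofFinite (MaximalSpectrum C)
  have hprod : ∏ 𝔪, g 𝔪 ≠ 0 := Finset.prod_ne_zero_iff.mpr fun 𝔪 _ => hg0 𝔪
  obtain ⟨v, hv⟩ : ∃ v, MvPolynomial.eval v (∏ 𝔪, g 𝔪) ≠ 0 := by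
    by_contra! hcon
    exact hprod (MvPolynomial.funext fun v => by rw [hcon, map_zero])
  refine ⟨v, ?_⟩
  by_contra hnu
  obtain ⟨m, hm, hmem⟩ := exists_max_ideal_of_mem_nonunits hnu
  rw [map_prod, Finset.prod_ne_zero_iff] at hv
  exact hg ⟨m, hm⟩ v (hv _ (Finset.mem_univ _)) hmem

variable {k S L : Type*} [Field k] [CommRing S] [Algebra k S] [CommRing L] [Algebra k L]

/-- The space `φ(V)/t`. -/
def divSp (φ : S →ₐ[k] L) (V : Submodule k S) (ti : L) : Submodule k L :=
  Submodule.span k {ti} * V.map φ.toLinearMap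

lemma divSp_pow (φ : S →ₐ[k] L) (V : Submodule k S) (ti : L) (m : ℕ) :
    divSp φ V ti ^ m = Submodule.span k {ti ^ m} * (V ^ m).map φ.toLinearMap := by
  rw [divSp, mul_pow, Submodule.span_pow, Set.singleton_pow, Submodule.map_pow]

lemma mem_divSp_pow (φ : S →ₐ[k] L) (V : Submodule k S) (ti : L) (m : ℕ) (z : L) :
    z ∈ divSp φ V ti ^ m ↔ ∃ s ∈ V ^ m, ti ^ m * φ s = z := by
  rw [divSp_pow, Submodule.mem_span_singleton_mul]
  constructor
  · rintro ⟨_, ⟨s, hs, rfl⟩, rfl⟩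
    exact ⟨s, hs, rfl⟩
  · rintro ⟨s, hs, rfl⟩
    exact ⟨_, ⟨s, hs, rfl⟩, rfl⟩

lemma mem_divSp (φ : S →ₐ[k] L) (V : Submodule k S) (ti : L) {s : S} (hs : s ∈ V) :
    ti * φ s ∈ divSp φ V ti := by
  have := (mem_divSp_pow φ V ti 1 (ti * φ s)).mpr ⟨s, by simpa using hs, by simp⟩
  simpa using this

lemma divSp_le (φ : S →ₐ[k] L) (V W : Submodule k S) (ti : L) (m : ℕ)
    (h : V ^ (m + 1) ≤ W * V ^ m) :
    divSp φ V ti ^ (m + 1) ≤ divSp φ W ti * divSp φ V ti ^ m := by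
  rw [divSp_pow, divSp_pow, divSp, mul_mul_mul_comm, Submodule.span_mul_span,
    Set.singleton_mul_singleton, ← Submodule.map_mul, ← pow_succ']
  exact mul_le_mul_right_ (Submodule.map_mono h)

lemma one_mem_divSp_pow (φ : S →ₐ[k] L) (V : Submodule k S) (ti : L) (t : S) (ht : t ∈ V)
    (hti : ti * φ t = 1) (m : ℕ) : (1 : L) ∈ divSp φ V ti ^ m := by
  rw [mem_divSp_pow]
  refine ⟨t ^ m, Submodule.pow_mem_pow V ht m, ?_⟩
  rw [map_pow, ← mul_pow, hti, one_pow]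

lemma divSp_sup (φ : S →ₐ[k] L) (U : Submodule k S) (hU : ∀ u ∈ U, φ u = 0) (ti : L) (y : S) :
    divSp φ (U ⊔ Submodule.span k {y}) ti = Submodule.span k {ti * φ y} := by
  have h0 : U.map φ.toLinearMap = ⊥ := by
    rw [eq_bot_iff]
    rintro _ ⟨u, hu, rfl⟩
    exact hU u hu
  rw [divSp, Submodule.map_sup, h0, bot_sup_eq, Submodule.map_span, Set.image_singleton,
    Submodule.span_mul_span, Set.singleton_mul_singleton]
  rfl

lemma adjoin_le_pow (D : Submodule k L) (h1 : (1 : L) ∈ D) (m : ℕ)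
    (h : D ^ (m + 1) ≤ D ^ m) :
    Subalgebra.toSubmodule (Algebra.adjoin k (D : Set L)) ≤ D ^ m := by
  refine (adjoin_le_iSup D).trans (iSup_le fun l => ?_)
  have h1' : (1 : Submodule k L) ≤ D := Submodule.one_le.mpr h1
  have hq : ∀ q, D ^ (m + q) ≤ D ^ m := by
    intro q
    induction q with
    | zero => exact le_rfl
    | succ q ih =>
      refine le_trans ?_ h
      rw [← add_assoc, pow_succ, pow_succ]
      exact mul_le_mul_left_ ih
  exact (pow_le_pow_right' h1' (Nat.le_add_left l m)).trans (hq l)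

lemma finite_adjoin (D : Submodule k L) (hD : D.FG) (h1 : (1 : L) ∈ D) (m : ℕ)
    (h : D ^ (m + 1) ≤ D ^ m) : Module.Finite k (Algebra.adjoin k (D : Set L)) := by
  have he : Subalgebra.toSubmodule (Algebra.adjoin k (D : Set L)) = D ^ m :=
    le_antisymm (adjoin_le_pow D h1 m h) (pow_le_adjoin D m)
  have h2 : (Subalgebra.toSubmodule (Algebra.adjoin k (D : Set L))).FG := by
    rw [he]; exact hD.pow m
  exact Module.Finite.iff_fg.mpr h2

/-- The element `φ(y)/t` of the algebra `k[φ(V)/t]`. -/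
def divEl (φ : S →ₐ[k] L) (V : Submodule k S) (ti : L) (y : S) (hy : y ∈ V) :
    Algebra.adjoin k (divSp φ V ti : Set L) :=
  ⟨ti * φ y, Algebra.subset_adjoin (mem_divSp φ V ti hy)⟩

lemma isUnit_iff (φ : S →ₐ[k] L) (U V : Submodule k S) (ti : L) (t : S) (ht : t ∈ V)
    (hti : ti * φ t = 1) (hU : ∀ u ∈ U, φ u = 0) (J : Ideal S)
    (hker : ∀ s, φ s = 0 → ∃ N : ℕ, t ^ N * s ∈ J)
    (hJ : ∀ (m : ℕ) (s : S), s ∈ V ^ (m + 1) → s ∈ J → s ∈ U * V ^ m)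
    (m₁ : ℕ) (hm₁ : V ^ (m₁ + 1) ≤ (U ⊔ Submodule.span k {t}) * V ^ m₁)
    (y : S) (hy : y ∈ V) :
    (∃ m : ℕ, V ^ (m + 1) ≤ (U ⊔ Submodule.span k {y}) * V ^ m) ↔
      IsUnit (divEl φ V ti y hy) := by
  have h1D : (1 : L) ∈ divSp φ V ti := by
    simpa using one_mem_divSp_pow φ V ti t ht hti 1
  constructor
  · rintro ⟨m, hm⟩
    have h := divSp_le φ V _ ti m hm (one_mem_divSp_pow φ V ti t ht hti (m + 1))
    rw [divSp_sup φ U hU, Submodule.mem_span_singleton_mul] at h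
    obtain ⟨z, hz, hz1⟩ := h
    exact IsUnit.of_mul_eq_one ⟨z, pow_le_adjoin _ m hz⟩ (Subtype.ext hz1)
  · intro h
    obtain ⟨⟨z, hzC⟩, hz⟩ := h.exists_right_inv
    have hz1 : ti * φ y * z = 1 := congrArg Subtype.val hz
    have hD : divSp φ V ti ^ (m₁ + 1) ≤ divSp φ V ti ^ m₁ := by
      have h := divSp_le φ V _ ti m₁ hm₁
      rwa [divSp_sup φ U hU, hti, ← Submodule.one_eq_span, one_mul] at h
    have hz2 := adjoin_le_pow _ h1D m₁ hD hzC
    rw [mem_divSp_pow] at hz2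
    obtain ⟨s, hs, rfl⟩ := hz2
    have hphi : φ (y * s - t ^ (m₁ + 1)) = 0 := by
      have e1 : ti ^ (m₁ + 1) * φ (t ^ (m₁ + 1)) = 1 := by
        rw [map_pow, ← mul_pow, hti, one_pow]
      have e2 : ti ^ (m₁ + 1) * (φ y * φ s) = 1 := by
        rw [← hz1]; ring
      have e3 : φ (t ^ (m₁ + 1)) * ti ^ (m₁ + 1) = 1 := by rw [mul_comm, e1]
      rw [map_sub, map_mul, sub_eq_zero]
      calc φ y * φ s = (φ (t ^ (m₁ + 1)) * ti ^ (m₁ + 1)) * (φ y * φ s) := by rw [e3, one_mul]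
        _ = φ (t ^ (m₁ + 1)) * (ti ^ (m₁ + 1) * (φ y * φ s)) := by ring
        _ = _ := by rw [e2, mul_one]
    obtain ⟨N, hN⟩ := hker _ hphi
    have hys : y * (t ^ N * s) ∈ Submodule.span k {y} * V ^ (N + m₁) := by
      refine Submodule.mul_mem_mul (Submodule.mem_span_singleton_self y) ?_
      rw [pow_add]
      exact Submodule.mul_mem_mul (Submodule.pow_mem_pow V ht N) hs
    have hyV : Submodule.span k {y} ≤ V := by
      rw [Submodule.span_le, Set.singleton_subset_iff]; exact hy
    have hle : Submodule.span k {y} * V ^ (N + m₁) ≤ V ^ (N + m₁ + 1) := by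
      rw [pow_succ']; exact mul_le_mul_left_ hyV
    have hmem : t ^ N * (y * s - t ^ (m₁ + 1)) ∈ U * V ^ (N + m₁) := by
      refine hJ _ _ ?_ hN
      have e : t ^ N * (y * s - t ^ (m₁ + 1)) = y * (t ^ N * s) - t ^ (N + m₁ + 1) := by ring
      rw [e]
      exact sub_mem (hle hys) (Submodule.pow_mem_pow V ht _)
    have htM : t ^ (N + m₁ + 1) ∈ (U ⊔ Submodule.span k {y}) * V ^ (N + m₁) := by
      have e : t ^ (N + m₁ + 1) = y * (t ^ N * s) - t ^ N * (y * s - t ^ (m₁ + 1)) := by ring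
      rw [e, Submodule.sup_mul]
      exact sub_mem (Submodule.mem_sup_right hys) (Submodule.mem_sup_left hmem)
    have key : ∀ q : ℕ, V ^ (m₁ + q + 1) ≤
        U * V ^ (m₁ + q) ⊔ Submodule.span k {t ^ (q + 1)} * V ^ m₁ := by
      intro q
      induction q with
      | zero => simpa [Submodule.sup_mul] using hm₁
      | succ q ih =>
        calc V ^ (m₁ + (q + 1) + 1) = V ^ (m₁ + q + 1) * V := by
              rw [← pow_succ, ← add_assoc]
          _ ≤ (U * V ^ (m₁ + q) ⊔ Submodule.span k {t ^ (q + 1)} * V ^ m₁) * V :=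
              mul_le_mul_left_ ih
          _ = U * V ^ (m₁ + (q + 1)) ⊔ Submodule.span k {t ^ (q + 1)} * V ^ (m₁ + 1) := by
              rw [Submodule.sup_mul, mul_assoc, mul_assoc, ← pow_succ, ← pow_succ, add_assoc]
          _ ≤ U * V ^ (m₁ + (q + 1)) ⊔
              Submodule.span k {t ^ (q + 1)} * ((U ⊔ Submodule.span k {t}) * V ^ m₁) :=
              sup_le_sup le_rfl (mul_le_mul_right_ hm₁)
          _ ≤ _ := by
              refine sup_le le_sup_left ?_
              rw [Submodule.sup_mul, Submodule.mul_sup]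
              refine sup_le ?_ ?_
              · refine le_trans ?_ le_sup_left
                have htq : Submodule.span k {t ^ (q + 1)} ≤ V ^ (q + 1) := by
                  rw [Submodule.span_le, Set.singleton_subset_iff]
                  exact Submodule.pow_mem_pow V ht _
                calc _ = U * (Submodule.span k {t ^ (q + 1)} * V ^ m₁) := by
                      rw [mul_left_comm]
                  _ ≤ U * (V ^ (q + 1) * V ^ m₁) := mul_le_mul_right_ (mul_le_mul_left_ htq)
                  _ = _ := by rw [← pow_add, add_comm]
              · refine le_trans (le_of_eq ?_) le_sup_right
                rw [← mul_assoc, Submodule.span_mul_span, Set.singleton_mul_singleton, ← pow_succ]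
    refine ⟨m₁ + (N + m₁), (key (N + m₁)).trans (sup_le ?_ ?_)⟩
    · exact mul_le_mul_left_ le_sup_left
    · have : Submodule.span k {t ^ (N + m₁ + 1)} ≤
          (U ⊔ Submodule.span k {y}) * V ^ (N + m₁) := by
        rw [Submodule.span_le, Set.singleton_subset_iff]; exact htM
      refine (mul_le_mul_left_ this).trans (le_of_eq ?_)
      rw [mul_assoc, ← pow_add, add_comm m₁]

lemma span_top (φ : S →ₐ[k] L) (V : Submodule k S) (ti : L) (t : S) (ht : t ∈ V)
    (hti : ti * φ t = 1) {ι : Type*} (W : ι → S) (hW : ∀ h, W h ∈ V) (m : ℕ)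
    (hm : V ^ (m + 1) ≤ Submodule.span k (Set.range W) * V ^ m) :
    Ideal.span (Set.range fun h => divEl φ V ti (W h) (hW h)) = ⊤ := by
  have h := divSp_le φ V _ ti m hm (one_mem_divSp_pow φ V ti t ht hti (m + 1))
  rw [divSp, Submodule.map_span, Submodule.span_mul_span] at h
  set I := Ideal.span (Set.range fun h => divEl φ V ti (W h) (hW h)) with hI
  have key : Submodule.span k ({ti} * φ.toLinearMap '' Set.range W) * divSp φ V ti ^ m ≤
      (I.restrictScalars k).map (Algebra.adjoin k (divSp φ V ti : Set L)).val.toLinearMap := by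
    rw [Submodule.mul_le]
    intro a ha b hb
    induction ha using Submodule.span_induction with
    | mem a ha =>
      rw [Set.singleton_mul] at ha
      obtain ⟨_, ⟨_, ⟨h, rfl⟩, rfl⟩, rfl⟩ := ha
      exact ⟨divEl φ V ti (W h) (hW h) * ⟨b, pow_le_adjoin _ m hb⟩,
        I.mul_mem_right _ (Ideal.subset_span ⟨h, rfl⟩), rfl⟩
    | zero => rw [zero_mul]; exact zero_mem _
    | add x y _ _ hx hy => rw [add_mul]; exact add_mem hx hy
    | smul c x _ hx => rw [smul_mul_assoc]; exact Submodule.smul_mem _ _ hx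
  obtain ⟨z, hz, hz1⟩ := key h
  have : z = 1 := Subtype.ext hz1
  rw [Ideal.eq_top_iff_one, ← this]
  exact hz

end core

end GenExch

/-- Generic exchange for minimal complete reductions of a standard `ℕⁿ`-graded
algebra `S` over an infinite field: given two complete reductions `{x_{ij}}`
and `{w_{ij}}` of type `d = dim S^Δ ≥ 1`, there is a proper Zariski-closed set
`M ⊊ k^d` such that replacing the last column of `{x_{ij}}` with
`(Σ_h v_h w_{ih})ᵢ` yields a complete reduction iff `v ∉ M`. -/
theorem generic_exchange_complete_reductions (k S : Type*) [Field k]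
    [Infinite k] [CommRing S] [Algebra k S] (n : ℕ)
    (𝒜 : (Fin n → ℕ) → Submodule k S) [GradedAlgebra 𝒜]
    (hfg : Algebra.FiniteType k S) (h0 : 𝒜 0 = 1)
    (hstd : Algebra.adjoin k (⋃ i, (𝒜 (Pi.single i 1) : Set S)) = ⊤)
    (d : ℕ) (hd : 1 ≤ d)
    (hdim : ringKrullDim ↥(Algebra.adjoin k (𝒜 (fun _ => 1) : Set S)) = d)
    (x w : Fin n → Fin d → S)
    (hx : IsCompleteReduction k 𝒜 x) (hw : IsCompleteReduction k 𝒜 w) :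
    ∃ (m : ℕ) (f : Fin m → MvPolynomial (Fin d) k),
      (∃ c : Fin d → k, ¬ ∀ i, MvPolynomial.eval c (f i) = 0) ∧
      ∀ v : Fin d → k,
        (IsCompleteReduction k 𝒜
            (fun i j => if (j : ℕ) + 1 = d then ∑ h, v h • w i h else x i j)
          ↔ ¬ ∀ i, MvPolynomial.eval v (f i) = 0) := by 
  classical
  obtain rfl | hn := Nat.eq_zero_or_pos n
  · refine ⟨1, fun _ => 1, ⟨0, by simp⟩, fun v => ?_⟩
    have e : (fun (i : Fin 0) (j : Fin d) => if (j : ℕ) + 1 = d then ∑ h, v h • w i h else x i j) = x :=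
      funext fun i => i.elim0
    rw [e]
    simp [hx]
  have hV := GenExch.fg_of_isCR 𝒜 hn h0 x hx
  have hx1 := hx.1
  have hw1 := hw.1
  rw [GenExch.isCR_iff 𝒜 hn h0 hV _ hx1] at hx
  rw [GenExch.isCR_iff 𝒜 hn h0 hV _ hw1] at hw
  obtain ⟨m₁, hm₁⟩ := hx
  obtain ⟨m₂, hm₂⟩ := hw
  let j₀ : Fin d := ⟨d - 1, by omega⟩
  have hj₀ : ∀ j : Fin d, (j : ℕ) + 1 = d ↔ j = j₀ := by
    intro j
    rw [Fin.ext_iff]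
    show _ ↔ (j : ℕ) = d - 1
    omega
  let t : S := ∏ i, x i j₀
  let G : Set S := (fun j => ∏ i, x i j) '' {j : Fin d | j ≠ j₀}
  have hG : G ⊆ 𝒜 (fun _ => 1) := by
    rintro _ ⟨j, _, rfl⟩
    exact GenExch.prod_mem_diag 𝒜 _ fun i => hx1 i j
  have ht : t ∈ 𝒜 (fun _ => 1) := GenExch.prod_mem_diag 𝒜 _ fun i => hx1 i j₀
  let J : Ideal S := Ideal.span G
  let L := Localization.Away (Ideal.Quotient.mk J t)
  let φ : S →ₐ[k] L := (IsScalarTower.toAlgHom k (S ⧸ J) L).comp (Ideal.Quotient.mkₐ k J)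
  have hφ : ∀ s, φ s = algebraMap (S ⧸ J) L (Ideal.Quotient.mk J s) := fun s => rfl
  let ti : L := IsLocalization.Away.invSelf (Ideal.Quotient.mk J t)
  have hti : ti * φ t = 1 := by
    rw [hφ, mul_comm]
    exact IsLocalization.Away.mul_invSelf (Ideal.Quotient.mk J t)
  let U : Submodule k S := Submodule.span k G
  have hU : ∀ u ∈ U, φ u = 0 := by
    intro u hu
    have huJ : u ∈ J := by
      have : U ≤ J.restrictScalars k := Submodule.span_le.mpr Ideal.subset_span
      exact this hu
    rw [hφ, Ideal.Quotient.eq_zero_iff_mem.mpr huJ, map_zero]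
  have hker : ∀ s, φ s = 0 → ∃ N : ℕ, t ^ N * s ∈ J := by
    intro s hs
    rw [hφ, IsLocalization.map_eq_zero_iff (Submonoid.powers (Ideal.Quotient.mk J t)) L] at hs
    obtain ⟨⟨_, N, rfl⟩, hN⟩ := hs
    refine ⟨N, ?_⟩
    rw [← Ideal.Quotient.eq_zero_iff_mem, map_mul, map_pow]
    exact hN
  have hJ : ∀ (m : ℕ) (s : S), s ∈ (𝒜 (fun _ => 1)) ^ (m + 1) → s ∈ J →
      s ∈ U * (𝒜 (fun _ => 1)) ^ m := fun m s hs hsJ =>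
    GenExch.mem_of_mem_ideal 𝒜 hstd G hG m s hs hsJ
  have hspan : ∀ (F : Fin d → S) (y : S), F j₀ = y → (∀ j, j ≠ j₀ → F j = ∏ i, x i j) →
      Submodule.span k (Set.range F) = U ⊔ Submodule.span k {y} := by
    intro F y hy hF
    rw [← Submodule.span_union]
    congr 1
    ext s
    constructor
    · rintro ⟨j, rfl⟩
      by_cases hj : j = j₀
      · right; rw [hj]; exact hy
      · left; exact ⟨j, hj, (hF j hj).symm⟩
    · rintro (⟨j, hj, rfl⟩ | hs)
      · exact ⟨j, hF j hj⟩
      · exact ⟨j₀, hy.trans hs.symm⟩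
  rw [hspan _ t rfl (fun _ _ => rfl)] at hm₁
  have hiff := GenExch.isUnit_iff φ U (𝒜 (fun _ => 1)) ti t ht hti hU J hker hJ m₁ hm₁
  have hcV : ∀ σ : Fin n → Fin d, ∏ i, w i (σ i) ∈ 𝒜 (fun _ => 1) := fun σ =>
    GenExch.prod_mem_diag 𝒜 _ fun i => hw1 i (σ i)
  have hfin : Module.Finite k
      (Algebra.adjoin k (GenExch.divSp φ (𝒜 (fun _ => 1)) ti : Set L)) := by
    refine GenExch.finite_adjoin _ ?_ ?_ m₁ ?_
    · exact (Submodule.fg_span_singleton ti).mul (hV.map φ.toLinearMap)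
    · simpa using GenExch.one_mem_divSp_pow φ (𝒜 (fun _ => 1)) ti t ht hti 1
    · have h := GenExch.divSp_le φ (𝒜 (fun _ => 1)) _ ti m₁ hm₁
      rwa [GenExch.divSp_sup φ U hU, hti, ← Submodule.one_eq_span, one_mul] at h
  obtain ⟨f, ⟨c, hc⟩, hf⟩ := GenExch.exists_poly (k := k)
    (fun σ : Fin n → Fin d => GenExch.divEl φ (𝒜 (fun _ => 1)) ti _ (hcV σ))
    (GenExch.span_top φ (𝒜 (fun _ => 1)) ti t ht hti (fun h => ∏ i, w i h)
      (fun h => hcV (fun _ => h)) m₂ hm₂)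
  refine ⟨1, fun _ => f, ⟨c, by simpa using hc⟩, fun v => ?_⟩
  have hyE : ∀ i, ∑ h, v h • w i h ∈ 𝒜 (Pi.single i 1) := fun i =>
    Submodule.sum_mem _ fun h _ => Submodule.smul_mem _ _ (hw1 i h)
  have hyV := GenExch.prod_mem_diag 𝒜 _ hyE
  rw [GenExch.isCR_iff 𝒜 hn h0 hV]
  · rw [hspan _ (∏ i, ∑ h, v h • w i h), hiff _ hyV]
    · have hexp : ∏ i, ∑ h, v h • w i h =
          ∑ σ : Fin n → Fin d, (∏ i, v (σ i)) • ∏ i, w i (σ i) := by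
        rw [Finset.prod_univ_sum, Fintype.piFinset_univ]
        refine Finset.sum_congr rfl fun σ _ => ?_
        simp only [Algebra.smul_def, Finset.prod_mul_distrib, map_prod]
      have hel : GenExch.divEl φ (𝒜 (fun _ => 1)) ti _ hyV =
          ∑ σ : Fin n → Fin d, (∏ i, v (σ i)) •
            GenExch.divEl φ (𝒜 (fun _ => 1)) ti _ (hcV σ) := by
        apply Subtype.ext
        rw [AddSubmonoidClass.coe_finsetSum]
        show ti * φ _ = ∑ σ : Fin n → Fin d, (∏ i, v (σ i)) • (ti * φ _)
        rw [hexp, map_sum, Finset.mul_sum]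
        refine Finset.sum_congr rfl fun σ _ => ?_
        rw [map_smul, mul_smul_comm]
      rw [hel, ← hf v]
      simp
    · simp [hj₀]
    · intro j hj
      simp [hj₀, hj]
  · intro i j
    split_ifs
    · exact hyE i
    · exact hx1 i j
end
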